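/- arXiv:2202.05646 — 3 statements merged into one kernel-verified Lean document; each statement's English description precedes it below -/
import Mathlib

section
/- Let g be a holomorphic function on the punctured unit disc 𝔻* and let c ∈ ℂ. Assume that for every θ ∈ ℝ there exists a branch L_θ of the logarithm on 𝔻 ∖ l^θ such that the map z ↦ g(z) + (c/(2πi))·L_θ(z) is injective on 𝔻 ∖ l^θ. Then g cannot have an essential singularity at 0; that is, there exists n ∈ ℕ such that z ↦ z^n·g(z) extends holomorphically across 0. -/
open Complex Metric Set Filter Topology

/-- The closed ray `{t·e^{iθ} : t ≥ 0} ⊆ ℂ`. -/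
def lray (θ : ℝ) : Set ℂ :=
  {z : ℂ | ∃ t : ℝ, 0 ≤ t ∧ z = (t : ℂ) * Complex.exp (θ * Complex.I)}

/-!
An injective holomorphic function omitting a value `w` on a disc of radius `R` satisfies
`‖f'‖ * R ≤ C * ‖f - w‖` at the centre. On a disc slit along a ray, points whose direction stays
away from the ray are centres of discs of radius comparable to `‖z‖`, on which an injective branch
`φ = g + k * log` omits its value at a fixed point of larger modulus. There
`‖z‖ * ‖φ'‖ ≤ C' * ‖φ - w‖`, and Gronwall's inequality along radii gives `φ = O(‖z‖⁻ⁿ)`; so do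
`log` and hence `g`. The good directions of two distinct rays cover a punctured neighbourhood
of `0`.
-/

open Asymptotics

section DistortionOfInjectiveMaps

variable {f : ℂ → ℂ} {p z₀ : ℂ} {r R : ℝ}

lemma half_norm_deriv_mul_norm_sub_le
    (hf : ∀ z ∈ closedBall p r, DifferentiableAt ℂ f z)
    (hderiv : ∀ z ∈ closedBall p r, ‖deriv f z - deriv f p‖ ≤ ‖deriv f p‖ / 2)
    {z : ℂ} (hz : z ∈ closedBall p r) :
    ‖deriv f p‖ / 2 * ‖z - p‖ ≤ ‖f z - f p‖ := by
  have hp : p ∈ closedBall p r := mem_closedBall_self (dist_nonneg.trans (mem_closedBall.1 hz))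
  have hremainder := (convex_closedBall p r).norm_image_sub_le_of_norm_hasDerivWithin_le
    (f := fun w => f w - deriv f p * w) (f' := fun w => deriv f w - deriv f p)
    (fun w hw => by
      simpa using! ((hf w hw).hasDerivAt.sub
        ((hasDerivAt_id w).const_mul (deriv f p))).hasDerivWithinAt)
    hderiv hp hz
  have hlinear : ‖deriv f p * (z - p)‖ ≤
      ‖f z - f p‖ + ‖f z - deriv f p * z - (f p - deriv f p * p)‖ :=
    calc ‖deriv f p * (z - p)‖
        = ‖(f z - f p) - (f z - deriv f p * z - (f p - deriv f p * p))‖ := by ring_nf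
      _ ≤ _ := norm_sub_le _ _
  rw [norm_mul] at hlinear
  linarith

lemma ball_subset_image_closedBall_of_norm_deriv_sub_le (hr : 0 < r) (hp : deriv f p ≠ 0)
    (hf : ∀ z ∈ closedBall p r, DifferentiableAt ℂ f z)
    (hderiv : ∀ z ∈ closedBall p r, ‖deriv f z - deriv f p‖ ≤ ‖deriv f p‖ / 2) :
    ball (f p) (‖deriv f p‖ * r / 4) ⊆ f '' closedBall p r := by
  have hdiff : DiffContOnCl ℂ f (ball p r) :=
    DifferentiableOn.diffContOnCl fun z hz =>
      (hf z (closure_ball_subset_closedBall hz)).differentiableWithinAt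
  have hsphere : ∀ z ∈ sphere p r, ‖deriv f p‖ / 2 * r ≤ ‖f z - f p‖ := fun z hz => by
    simpa only [← mem_sphere_iff_norm.1 hz] using
      half_norm_deriv_mul_norm_sub_le hf hderiv (sphere_subset_closedBall hz)
  have hne : ∃ᶠ z in 𝓝 p, f z ≠ f p :=
    ((hf p (mem_closedBall_self hr.le)).hasDerivAt.eventually_ne hp).frequently.filter_mono
      nhdsWithin_le_nhds
  convert! hdiff.ball_subset_image_closedBall hr hsphere hne using 2
  ring

lemma ball_subset_image_ball_of_norm_deriv_le_two_mul (hr : 0 < r) (hp : deriv f p ≠ 0)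
    (hf : DifferentiableOn ℂ f (ball p r))
    (hderiv : ∀ z ∈ ball p r, ‖deriv f z‖ ≤ 2 * ‖deriv f p‖) :
    ball (f p) (‖deriv f p‖ * r / 24) ⊆ f '' ball p r := by
  have hsub : closedBall p (r / 6) ⊆ ball p r := closedBall_subset_ball (by linarith)
  have hmaps : MapsTo (deriv f) (ball p r) (closedBall (deriv f p) (3 * ‖deriv f p‖)) :=
    fun z hz => by
      rw [mem_closedBall_iff_norm]
      linarith [norm_sub_le (deriv f z) (deriv f p), hderiv z hz]
  have hosc : ∀ z ∈ closedBall p (r / 6), ‖deriv f z - deriv f p‖ ≤ ‖deriv f p‖ / 2 :=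
    fun z hz => calc
      ‖deriv f z - deriv f p‖ ≤ 3 * ‖deriv f p‖ / r * dist z p := by
        rw [← dist_eq_norm]
        exact dist_le_div_mul_dist_of_mapsTo_ball (hf.deriv isOpen_ball) hmaps (hsub hz)
      _ ≤ 3 * ‖deriv f p‖ / r * (r / 6) := by gcongr; exact mem_closedBall.1 hz
      _ = ‖deriv f p‖ / 2 := by field_simp; norm_num
  have himage := ball_subset_image_closedBall_of_norm_deriv_sub_le (by positivity) hp
    (fun z hz => hf.differentiableAt (isOpen_ball.mem_nhds (hsub hz))) hosc
  rw [show ‖deriv f p‖ * r / 24 = ‖deriv f p‖ * (r / 6) / 4 by ring]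
  exact himage.trans (image_mono hsub)

/- Bloch's theorem. Hofer's lemma moves the centre to a point `p` around which `deriv f` is at most
twice as large as at `p`, without losing more than a constant in (radius) * (derivative). -/
theorem exists_ball_subset_image_ball (hR : 0 < R) (hf : DifferentiableOn ℂ f (ball z₀ R)) :
    ∃ b : ℂ, ball b (R * ‖deriv f z₀‖ / 96) ⊆ f '' ball z₀ R := by
  by_cases hz₀ : deriv f z₀ = 0
  · exact ⟨0, by simp [hz₀]⟩
  have hsub : closedBall z₀ (3 * R / 4) ⊆ ball z₀ R := closedBall_subset_ball (by linarith)
  have : CompleteSpace (closedBall z₀ (3 * R / 4)) := isClosed_closedBall.completeSpace_coe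
  have hcont : Continuous fun z : closedBall z₀ (3 * R / 4) => ‖deriv f z‖ :=
    (((hf.deriv isOpen_ball).continuousOn.mono hsub).domRestrict).norm
  obtain ⟨s, hs, ⟨p, _⟩, hsR, hpz₀, hsp, hmax⟩ :=
    hofer ⟨z₀, mem_closedBall_self (by positivity)⟩ (R / 4) (by positivity) hcont
      fun _ => norm_nonneg _
  replace hpz₀ : dist p z₀ ≤ 2 * (R / 4) := hpz₀
  have hball : ball p s ⊆ closedBall z₀ (3 * R / 4) :=
    ball_subset_closedBall.trans (closedBall_subset_closedBall' (by linarith))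
  have hp : deriv f p ≠ 0 := by
    have hpos : 0 < s * ‖deriv f p‖ := lt_of_lt_of_le (by positivity) hsp
    exact norm_pos_iff.1 (pos_of_mul_pos_right hpos hs.le)
  have himage := ball_subset_image_ball_of_norm_deriv_le_two_mul hs hp
    (hf.mono (hball.trans hsub)) fun z hz => hmax ⟨z, hball hz⟩ (mem_ball'.1 hz).le
  refine ⟨f p, (ball_subset_ball ?_).trans (himage.trans (image_mono (hball.trans hsub)))⟩
  linarith

lemma exists_differentiableOn_exp_eq (hf : DifferentiableOn ℂ f (ball z₀ R))
    (hne : ∀ z ∈ ball z₀ R, f z ≠ 0) :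
    ∃ l : ℂ → ℂ, DifferentiableOn ℂ l (ball z₀ R) ∧ ∀ z ∈ ball z₀ R, Complex.exp (l z) = f z := by
  obtain ⟨l, hlz₀, hl⟩ :=
    ((hf.deriv isOpen_ball).div hf hne).isExactOn_ball.with_val_at z₀ (Complex.log (f z₀))
  refine ⟨l, fun z hz => (hl z hz).differentiableAt.differentiableWithinAt, fun z hz => ?_⟩
  have hz₀ : z₀ ∈ ball z₀ R := mem_ball_self (pos_of_mem_ball hz)
  have hquot : ∀ w ∈ ball z₀ R, HasDerivAt (fun w => f w * Complex.exp (-l w)) 0 w := by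
    intro w hw
    have hfw := (hf.differentiableAt (isOpen_ball.mem_nhds hw)).hasDerivAt
    refine (hfw.mul (hl w hw).neg.cexp).congr_deriv ?_
    rw [Pi.div_apply]
    field_simp [hne w hw]
    ring
  have hconst := (convex_ball z₀ R).is_const_of_fderivWithin_eq_zero (𝕜 := ℂ)
    (fun w hw => (hquot w hw).differentiableAt.differentiableWithinAt)
    (fun w hw => by
      simpa using ((hquot w hw).hasFDerivAt.hasFDerivWithinAt.fderivWithin
        (isOpen_ball.uniqueDiffWithinAt hw))) hz hz₀
  simp only [hlz₀, Complex.exp_neg, Complex.exp_log (hne z₀ hz₀),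
    mul_inv_cancel₀ (hne z₀ hz₀)] at hconst
  exact (eq_of_mul_inv_eq_one hconst).symm

lemma radius_le_pi_of_ball_subset_image {l : ℂ → ℂ} {s : Set ℂ} {b : ℂ} {ρ : ℝ}
    (hinj : InjOn (fun z => Complex.exp (l z)) s) (hb : ball b ρ ⊆ l '' s) : ρ ≤ Real.pi := by
  by_contra! hρ
  have hnorm : ‖(Real.pi : ℂ) * I‖ = Real.pi := by
    rw [norm_mul, norm_I, mul_one, norm_real, Real.norm_of_nonneg Real.pi_pos.le]
  obtain ⟨z, hz, hlz⟩ := hb (show b + Real.pi * I ∈ ball b ρ by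
    rwa [mem_ball_iff_norm, add_sub_cancel_left, hnorm])
  obtain ⟨w, hw, hlw⟩ := hb (show b - Real.pi * I ∈ ball b ρ by
    rwa [mem_ball_iff_norm, sub_sub_cancel_left, norm_neg, hnorm])
  have hlzw : l z = l w + 2 * Real.pi * I := by rw [hlz, hlw]; ring
  have hzw : z = w := hinj hz hw (by
    simp only [hlzw, Complex.exp_add, Complex.exp_two_pi_mul_I, mul_one])
  rw [hzw, left_eq_add] at hlzw
  exact two_pi_I_ne_zero hlzw

/- The logarithm of `f - w` inherits injectivity modulo `2πi`, so by Bloch's theorem its derivative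
cannot be large. -/
theorem norm_deriv_mul_le_of_injOn_of_forall_ne (hR : 0 < R) (hf : DifferentiableOn ℂ f (ball z₀ R))
    (hinj : InjOn f (ball z₀ R)) {w : ℂ} (hw : ∀ z ∈ ball z₀ R, f z ≠ w) :
    ‖deriv f z₀‖ * R ≤ 96 * Real.pi * ‖f z₀ - w‖ := by
  have hz₀ : z₀ ∈ ball z₀ R := mem_ball_self hR
  obtain ⟨l, hl, hexp⟩ := exists_differentiableOn_exp_eq (hf.sub_const w)
    fun z hz => sub_ne_zero.2 (hw z hz)
  have hderiv : deriv f z₀ = (f z₀ - w) * deriv l z₀ := by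
    have hld := (hl.differentiableAt (isOpen_ball.mem_nhds hz₀)).hasDerivAt
    have heq : (fun z => Complex.exp (l z)) =ᶠ[𝓝 z₀] fun z => f z - w :=
      eventually_of_mem (isOpen_ball.mem_nhds hz₀) hexp
    rw [← hexp z₀ hz₀, ← hld.cexp.deriv, heq.deriv_eq, deriv_sub_const]
  obtain ⟨b, hb⟩ := exists_ball_subset_image_ball hR hl
  have hinj_exp : InjOn (fun z => Complex.exp (l z)) (ball z₀ R) :=
    ((sub_left_injective (b := w)).comp_injOn hinj).congr fun z hz => (hexp z hz).symm
  have hpi := radius_le_pi_of_ball_subset_image hinj_exp hb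
  calc ‖deriv f z₀‖ * R = 96 * (R * ‖deriv l z₀‖ / 96) * ‖f z₀ - w‖ := by
        rw [hderiv, norm_mul]; ring
    _ ≤ 96 * Real.pi * ‖f z₀ - w‖ := by gcongr

end DistortionOfInjectiveMaps

section GrowthAtIsolatedSingularity

variable {E : Type*} [NormedAddCommGroup E]

lemma norm_le_rpow_mul_of_mul_norm_deriv_le [NormedSpace ℝ E] {F F' : ℝ → E} {r K δ ε : ℝ}
    (hK : 0 < K) (hε : 0 ≤ ε) (hF : ∀ t ∈ Ioc 0 r, HasDerivAt F (F' t) t) (hr : ‖F r‖ ≤ δ)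
    (hbound : ∀ t ∈ Ioc 0 r, t * ‖F' t‖ ≤ K * ‖F t‖ + ε) {t : ℝ} (ht : t ∈ Ioc 0 r) :
    ‖F t‖ ≤ (r / t) ^ K * (δ + ε / K) := by
  have hr0 : 0 < r := ht.1.trans_le ht.2
  set γ : ℝ → ℝ := fun x => r * Real.exp (-x) with hγ_def
  have hγ_mem : ∀ x, 0 ≤ x → γ x ∈ Ioc 0 r := fun x hx =>
    ⟨by positivity, mul_le_of_le_one_right hr0.le (Real.exp_le_one_iff.2 (by linarith))⟩
  have hγ_deriv : ∀ x, HasDerivAt γ (-γ x) x := fun x => by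
    simpa [hγ_def] using (hasDerivAt_neg x).exp.const_mul r
  have hcomp : ∀ x, 0 ≤ x → HasDerivAt (F ∘ γ) (-γ x • F' (γ x)) x := fun x hx =>
    (hF _ (hγ_mem x hx)).scomp x (hγ_deriv x)
  have hlog : 0 ≤ Real.log (r / t) := Real.log_nonneg ((one_le_div ht.1).2 ht.2)
  have hγ_log : γ (Real.log (r / t)) = t := by
    simp only [hγ_def, Real.exp_neg, Real.exp_log (div_pos hr0 ht.1)]
    field_simp
  have hgronwall := norm_le_gronwallBound_of_norm_deriv_right_le (δ := δ) (K := K) (ε := ε)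
    (fun x hx => (hcomp x hx.1).continuousAt.continuousWithinAt)
    (fun x hx => (hcomp x hx.1).hasDerivWithinAt) (by simpa [hγ_def] using hr)
    (fun x hx => by
      have hx' := hγ_mem x hx.1
      rw [norm_smul, norm_neg, Real.norm_of_nonneg hx'.1.le]
      exact hbound _ hx')
    (Real.log (r / t)) ⟨hlog, le_rfl⟩
  rw [Function.comp_apply, hγ_log, sub_zero, gronwallBound_of_K_ne_0 hK.ne'] at hgronwall
  simp only [mul_comm K, ← Real.rpow_def_of_pos (div_pos hr0 ht.1)] at hgronwall
  have : 0 ≤ ε / K := by positivity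
  linarith

lemma norm_le_rpow_mul_of_forall_mem_ray [NormedSpace ℂ E] {f : ℂ → E} {v : ℂ} {r K δ ε : ℝ}
    (hv : ‖v‖ = 1) (hK : 0 < K) (hε : 0 ≤ ε) (hf : ∀ t ∈ Ioc 0 r, DifferentiableAt ℂ f (t * v))
    (hr : ‖f (r * v)‖ ≤ δ) (hbound : ∀ t ∈ Ioc 0 r, t * ‖deriv f (t * v)‖ ≤ K * ‖f (t * v)‖ + ε)
    {t : ℝ} (ht : t ∈ Ioc 0 r) : ‖f (t * v)‖ ≤ (r / t) ^ K * (δ + ε / K) := by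
  have hderiv : ∀ s ∈ Ioc 0 r,
      HasDerivAt (fun s : ℝ => f (s * v)) (v • deriv f (s * v)) s := fun s hs => by
    simpa using! (hf s hs).hasDerivAt.scomp s ((hasDerivAt_id s).ofReal_comp.mul_const v)
  refine norm_le_rpow_mul_of_mul_norm_deriv_le hK hε hderiv hr (fun s hs => ?_) ht
  simpa only [norm_smul, hv, one_mul] using hbound s hs

lemma isBigO_inv_pow_of_norm_mul_norm_deriv_le [NormedSpace ℂ E] {S : Set ℂ} (hS : IsClosed S)
    (hcone : ∀ z ∈ S, ∀ t : ℝ, 0 < t → t * z ∈ S) {f : ℂ → E} {r ε : ℝ} {n : ℕ} (hr : 0 < r)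
    (hn : n ≠ 0) (hε : 0 ≤ ε) (hf : ∀ z ∈ S, z ≠ 0 → ‖z‖ ≤ r → DifferentiableAt ℂ f z)
    (hbound : ∀ z ∈ S, z ≠ 0 → ‖z‖ ≤ r → ‖z‖ * ‖deriv f z‖ ≤ n * ‖f z‖ + ε) :
    f =O[𝓝[S \ {0}] 0] fun z => (z ^ n)⁻¹ := by
  have hcont : ContinuousOn f (sphere 0 r ∩ S) := fun z ⟨hz, hzS⟩ =>
    (hf z hzS (ne_of_mem_sphere hz hr.ne')
      (mem_sphere_zero_iff_norm.1 hz).le).continuousAt.continuousWithinAt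
  obtain ⟨δ, hδ⟩ := ((isCompact_sphere 0 r).inter_right hS).exists_bound_of_continuousOn hcont
  refine IsBigO.of_bound (r ^ n * (δ + ε / n)) ?_
  filter_upwards [self_mem_nhdsWithin, nhdsWithin_le_nhds (closedBall_mem_nhds 0 hr)]
    with z ⟨hzS, hz0⟩ hzr
  have hz_pos : 0 < ‖z‖ := norm_pos_iff.2 hz0
  set v : ℂ := (‖z‖⁻¹ : ℝ) * z with hv_def
  have hv_norm : ‖v‖ = 1 := by simp [hv_def, hz_pos.ne']
  have hnorm : ∀ t ∈ Ioc 0 r, ‖(t : ℂ) * v‖ = t := fun t ht => by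
    rw [norm_mul, hv_norm, mul_one, Complex.norm_of_nonneg ht.1.le]
  have hray : ∀ t ∈ Ioc 0 r, (t : ℂ) * v ∈ S ∧ (t : ℂ) * v ≠ 0 ∧ ‖(t : ℂ) * v‖ ≤ r :=
    fun t ht => ⟨hcone _ (hcone z hzS _ (inv_pos.2 hz_pos)) t ht.1,
      norm_pos_iff.1 ((hnorm t ht).symm ▸ ht.1), (hnorm t ht).symm ▸ ht.2⟩
  have hr_mem : r ∈ Ioc 0 r := ⟨hr, le_rfl⟩
  have hgrowth := norm_le_rpow_mul_of_forall_mem_ray hv_norm (Nat.cast_pos.2 hn.bot_lt) hε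
    (fun t ht => let ⟨hmem, hne, hle⟩ := hray t ht; hf _ hmem hne hle)
    (hδ _ ⟨mem_sphere_zero_iff_norm.2 (hnorm r hr_mem), (hray r hr_mem).1⟩)
    (fun t ht => by
      obtain ⟨hmem, hne, hle⟩ := hray t ht
      simpa only [hnorm t ht] using hbound _ hmem hne hle)
    (t := ‖z‖) ⟨hz_pos, mem_closedBall_zero_iff.1 hzr⟩
  have hz_eq : (‖z‖ : ℂ) * v = z := by
    rw [hv_def, ofReal_inv, mul_inv_cancel_left₀ (ofReal_ne_zero.2 hz_pos.ne')]
  rw [hz_eq, Real.rpow_natCast, div_pow] at hgrowth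
  rw [norm_inv, norm_pow]
  exact hgrowth.trans_eq (by ring)

lemma exists_differentiableOn_eq_pow_smul [NormedSpace ℂ E] [CompleteSpace E] {f : ℂ → E}
    {s : Set ℂ} {c : ℂ} {n : ℕ} (hs : s ∈ 𝓝 c) (hf : DifferentiableOn ℂ f (s \ {c}))
    (hO : f =O[𝓝[≠] c] fun z => ((z - c) ^ n)⁻¹) :
    ∃ F : ℂ → E, DifferentiableOn ℂ F s ∧ ∀ z ∈ s \ {c}, F z = (z - c) ^ n • f z := by
  set F : ℂ → E := fun z => (z - c) ^ n • f z
  have hF : DifferentiableOn ℂ F (s \ {c}) := by fun_prop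
  have hbounded : F =O[𝓝[≠] c] fun _ => (1 : ℂ) := by
    refine ((isBigO_refl (fun z => (z - c) ^ n) _).smul hO).congr' .rfl ?_
    filter_upwards [self_mem_nhdsWithin] with z hz
    exact mul_inv_cancel₀ (pow_ne_zero n (sub_ne_zero.2 hz))
  have hinv : (fun _ => (1 : ℂ)) =o[𝓝[≠] c] fun z => (z - c)⁻¹ := by
    have hsub : Tendsto (fun z => z - c) (𝓝[≠] c) (𝓝[≠] 0) := by
      rw [← sub_self c]
      exact (continuous_sub_right c).continuousWithinAt.tendsto_nhdsWithin fun z hz =>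
        sub_left_injective.ne hz
    exact isLittleO_const_left.2 (Or.inr
      (tendsto_norm_cobounded_atTop.comp (tendsto_inv₀_nhdsNE_zero.comp hsub)))
  have hlittle : (fun z => F z - F c) =o[𝓝[≠] c] fun z => (z - c)⁻¹ :=
    (hbounded.sub (isBigO_const_const _ one_ne_zero _)).trans_isLittleO hinv
  exact ⟨_, differentiableOn_update_limUnder_of_isLittleO hs hF hlittle,
    fun z hz => Function.update_of_ne hz.2 _ _⟩

end GrowthAtIsolatedSingularity

section SlitDisc

/-- The closed cone of all `z = ‖z‖ * v` whose direction `v` is at distance at least `δ` from the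
direction `u`. The inequality is multiplied by `‖z‖` so that no division occurs. -/
def coneAwayFrom (u : ℂ) (δ : ℝ) : Set ℂ :=
  {z | δ * ‖z‖ ≤ ‖z - ‖z‖ * u‖}

variable {u v z : ℂ} {δ θ : ℝ}

lemma isClosed_coneAwayFrom : IsClosed (coneAwayFrom u δ) :=
  isClosed_le (by fun_prop) (by fun_prop)

lemma ofReal_mul_mem_coneAwayFrom (hz : z ∈ coneAwayFrom u δ) {t : ℝ} (ht : 0 < t) :
    t * z ∈ coneAwayFrom u δ := by
  have hscale : ‖(t : ℂ) * z - ‖(t : ℂ) * z‖ * u‖ = t * ‖z - ‖z‖ * u‖ := by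
    rw [norm_mul, Complex.norm_of_nonneg ht.le, ofReal_mul, mul_assoc, ← mul_sub, norm_mul,
      Complex.norm_of_nonneg ht.le]
  rw [coneAwayFrom, mem_ofPred_eq, hscale, norm_mul, Complex.norm_of_nonneg ht.le, mul_left_comm]
  exact mul_le_mul_of_nonneg_left hz ht.le

lemma coneAwayFrom_union_coneAwayFrom (hδ : 2 * δ ≤ ‖u - v‖) :
    coneAwayFrom u δ ∪ coneAwayFrom v δ = univ := by
  refine eq_univ_of_forall fun z => ?_
  by_contra hz
  simp only [coneAwayFrom, mem_union, mem_ofPred_eq, not_or, not_le] at hz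
  have htri : ‖z‖ * ‖u - v‖ ≤ ‖z - ‖z‖ * v‖ + ‖z - ‖z‖ * u‖ :=
    calc ‖z‖ * ‖u - v‖ = ‖(z - ‖z‖ * v) - (z - ‖z‖ * u)‖ := by
          rw [sub_sub_sub_cancel_left, ← mul_sub, norm_mul, norm_real, norm_norm]
      _ ≤ _ := norm_sub_le _ _
  nlinarith [mul_le_mul_of_nonneg_left hδ (norm_nonneg z)]

lemma zero_mem_lray : (0 : ℂ) ∈ lray θ := ⟨0, le_rfl, by simp⟩

lemma disjoint_ball_lray (hz : z ∈ coneAwayFrom (Complex.exp (θ * I)) δ) :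
    Disjoint (ball z (δ / 2 * ‖z‖)) (lray θ) := by
  rw [Set.disjoint_right]
  rintro _ ⟨t, ht, rfl⟩ hball
  set u := Complex.exp (θ * I)
  have hu : ‖u‖ = 1 := norm_exp_ofReal_mul_I θ
  have hnorm : ‖(t - ‖z‖ : ℂ) * u‖ ≤ ‖t * u - z‖ := by
    have h := abs_norm_sub_norm_le (t * u) z
    rw [norm_mul, hu, mul_one, Complex.norm_of_nonneg ht] at h
    rwa [norm_mul, hu, mul_one, ← ofReal_sub, norm_real]
  have htri : ‖z - ‖z‖ * u‖ ≤ ‖(t - ‖z‖ : ℂ) * u‖ + ‖t * u - z‖ :=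
    calc ‖z - ‖z‖ * u‖ = ‖(t - ‖z‖ : ℂ) * u - (t * u - z)‖ := by ring_nf
      _ ≤ _ := norm_sub_le _ _
  rw [mem_ball_iff_norm] at hball
  have hz' : δ * ‖z‖ ≤ ‖z - ‖z‖ * u‖ := hz
  linarith

lemma ball_subset_ball_diff_lray (hz : z ∈ coneAwayFrom (Complex.exp (θ * I)) δ) :
    ball z (δ / 2 * ‖z‖) ⊆ ball 0 (2 * ‖z‖) \ lray θ := by
  refine subset_sdiff.2 ⟨ball_subset_ball' ?_, disjoint_ball_lray hz⟩
  have hle : δ * ‖z‖ ≤ 2 * ‖z‖ :=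
    calc δ * ‖z‖ ≤ ‖z - ‖z‖ * Complex.exp (θ * I)‖ := hz
      _ ≤ ‖z‖ + ‖(‖z‖ : ℂ) * Complex.exp (θ * I)‖ := norm_sub_le _ _
      _ = 2 * ‖z‖ := by rw [norm_mul, norm_exp_ofReal_mul_I, norm_real, norm_norm]; ring
  rw [dist_zero_right]
  linarith

lemma neg_half_exp_mem_ball_diff_lray :
    -(1 / 2) * Complex.exp (θ * I) ∈ ball (0 : ℂ) 1 \ lray θ := by
  refine ⟨by norm_num [norm_exp_ofReal_mul_I], ?_⟩
  rintro ⟨t, ht, h⟩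
  have hre := congrArg re (mul_right_cancel₀ (Complex.exp_ne_zero _) h)
  norm_num at hre
  linarith

lemma hasDerivAt_inv_of_exp_eq {L : ℂ → ℂ} (hL : ContinuousAt L z)
    (hexp : ∀ᶠ w in 𝓝 z, Complex.exp (L w) = w) : HasDerivAt L z⁻¹ z := by
  have h := HasDerivAt.of_local_left_inverse hL (Complex.hasDerivAt_exp (L z))
    (Complex.exp_ne_zero _) hexp
  rwa [hexp.self_of_nhds] at h

end SlitDisc

/-- Some branch of the multivalued function `g + k * log` on the unit disc slit along `lray θ` is
injective. -/
def HasInjectiveBranch (g : ℂ → ℂ) (k : ℂ) (θ : ℝ) : Prop :=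
  ∃ L : ℂ → ℂ, DifferentiableOn ℂ L (ball (0 : ℂ) 1 \ lray θ) ∧
    (∀ z ∈ ball (0 : ℂ) 1 \ lray θ, Complex.exp (L z) = z) ∧
    InjOn (fun z => g z + k * L z) (ball (0 : ℂ) 1 \ lray θ)

section SlitGrowth

variable {θ δ : ℝ} {n : ℕ}

lemma ball_diff_lray_mem_nhds {z : ℂ} (hδ : 0 < δ)
    (hz : z ∈ coneAwayFrom (Complex.exp (θ * I)) δ) (hz0 : z ≠ 0) (hz_half : ‖z‖ ≤ 1 / 2) :
    ball (0 : ℂ) 1 \ lray θ ∈ 𝓝 z := by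
  refine mem_of_superset (ball_mem_nhds z (by positivity))
    ((ball_subset_ball_diff_lray hz).trans ?_)
  gcongr
  linarith

lemma norm_mul_norm_deriv_le_of_injOn {φ : ℂ → ℂ} (hδ : 0 < δ)
    (hφ : DifferentiableOn ℂ φ (ball (0 : ℂ) 1 \ lray θ))
    (hinj : InjOn φ (ball (0 : ℂ) 1 \ lray θ)) {z : ℂ}
    (hz : z ∈ coneAwayFrom (Complex.exp (θ * I)) δ) (hz0 : z ≠ 0) (hz_quarter : ‖z‖ ≤ 1 / 4) :
    ‖z‖ * ‖deriv φ z‖ ≤ 192 * Real.pi / δ * ‖φ z - φ (-(1 / 2) * Complex.exp (θ * I))‖ := by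
  have hball := ball_subset_ball_diff_lray hz
  have hsub : ball z (δ / 2 * ‖z‖) ⊆ ball 0 1 \ lray θ :=
    hball.trans (sdiff_subset_sdiff_left (ball_subset_ball (by linarith)))
  have homit : ∀ w ∈ ball z (δ / 2 * ‖z‖), φ w ≠ φ (-(1 / 2) * Complex.exp (θ * I)) := by
    intro w hw heq
    have hw_norm := mem_ball_zero_iff.1 (hball hw).1
    rw [hinj (hsub hw) neg_half_exp_mem_ball_diff_lray heq, norm_mul,
      norm_exp_ofReal_mul_I] at hw_norm
    norm_num at hw_norm
    linarith
  have hdistortion := norm_deriv_mul_le_of_injOn_of_forall_ne (by positivity) (hφ.mono hsub)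
    (hinj.mono hsub) homit
  rw [div_mul_eq_mul_div, le_div_iff₀ hδ]
  linarith

lemma isBigO_inv_pow_of_injOn {φ : ℂ → ℂ} (hδ : 0 < δ) (hn : 192 * Real.pi / δ ≤ n)
    (hφ : DifferentiableOn ℂ φ (ball (0 : ℂ) 1 \ lray θ))
    (hinj : InjOn φ (ball (0 : ℂ) 1 \ lray θ)) :
    φ =O[𝓝[coneAwayFrom (Complex.exp (θ * I)) δ \ {0}] 0] fun z => (z ^ n)⁻¹ := by
  set w := φ (-(1 / 2) * Complex.exp (θ * I))
  have hn0 : n ≠ 0 := Nat.cast_pos.1 (lt_of_lt_of_le (by positivity) hn) |>.ne'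
  refine isBigO_inv_pow_of_norm_mul_norm_deriv_le isClosed_coneAwayFrom
    (fun z hz t => ofReal_mul_mem_coneAwayFrom hz) (r := 1 / 4) (ε := n * ‖w‖) (by norm_num) hn0
    (by positivity) (fun z hz hz0 hzr => ?_) fun z hz hz0 hzr => ?_
  · exact hφ.differentiableAt (ball_diff_lray_mem_nhds hδ hz hz0 (by linarith))
  · calc ‖z‖ * ‖deriv φ z‖ ≤ 192 * Real.pi / δ * ‖φ z - w‖ :=
          norm_mul_norm_deriv_le_of_injOn hδ hφ hinj hz hz0 hzr
      _ ≤ n * (‖φ z‖ + ‖w‖) := by gcongr; exact norm_sub_le _ _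
      _ = n * ‖φ z‖ + n * ‖w‖ := mul_add _ _ _

lemma isBigO_inv_pow_of_exp_eq {L : ℂ → ℂ} (hδ : 0 < δ) (hn : n ≠ 0)
    (hL : ContinuousOn L (ball (0 : ℂ) 1 \ lray θ))
    (hexp : ∀ z ∈ ball (0 : ℂ) 1 \ lray θ, Complex.exp (L z) = z) :
    L =O[𝓝[coneAwayFrom (Complex.exp (θ * I)) δ \ {0}] 0] fun z => (z ^ n)⁻¹ := by
  have hderiv : ∀ z ∈ coneAwayFrom (Complex.exp (θ * I)) δ, z ≠ 0 → ‖z‖ ≤ 1 / 2 →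
      HasDerivAt L z⁻¹ z := fun z hz hz0 hzr => by
    have hnhds := ball_diff_lray_mem_nhds hδ hz hz0 hzr
    exact hasDerivAt_inv_of_exp_eq (hL.continuousAt hnhds) (eventually_of_mem hnhds hexp)
  refine isBigO_inv_pow_of_norm_mul_norm_deriv_le isClosed_coneAwayFrom
    (fun z hz t => ofReal_mul_mem_coneAwayFrom hz) (r := 1 / 2) (ε := 1) (by norm_num) hn
    zero_le_one (fun z hz hz0 hzr => (hderiv z hz hz0 hzr).differentiableAt)
    fun z hz hz0 hzr => ?_
  rw [(hderiv z hz hz0 hzr).deriv, norm_inv, mul_inv_cancel₀ (norm_ne_zero_iff.2 hz0)]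
  exact le_add_of_nonneg_left (by positivity)

lemma isBigO_inv_pow_of_hasInjectiveBranch {g : ℂ → ℂ} {k : ℂ}
    (hg : DifferentiableOn ℂ g (ball (0 : ℂ) 1 \ {0})) (hbranch : HasInjectiveBranch g k θ)
    (hδ : 0 < δ) (hn : 192 * Real.pi / δ ≤ n) :
    g =O[𝓝[coneAwayFrom (Complex.exp (θ * I)) δ \ {0}] 0] fun z => (z ^ n)⁻¹ := by
  obtain ⟨L, hL, hexp, hinj⟩ := hbranch
  have hn0 : n ≠ 0 := Nat.cast_pos.1 (lt_of_lt_of_le (by positivity) hn) |>.ne'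
  have hslit : ball (0 : ℂ) 1 \ lray θ ⊆ ball 0 1 \ {0} :=
    sdiff_subset_sdiff_right (singleton_subset_iff.2 zero_mem_lray)
  have hφ := isBigO_inv_pow_of_injOn hδ hn ((hg.mono hslit).add (hL.const_mul k)) hinj
  have hkL := (isBigO_inv_pow_of_exp_eq hδ hn0 hL.continuousOn hexp).const_mul_left k
  simpa using hφ.sub hkL

end SlitGrowth

theorem no_essential_singularity_of_injective_branches_general
    {g : ℂ → ℂ} (hg : DifferentiableOn ℂ g (ball (0 : ℂ) 1 \ {0})) {θ₁ θ₂ : ℝ}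
    (hθ : Complex.exp (θ₁ * I) ≠ Complex.exp (θ₂ * I)) {k₁ k₂ : ℂ}
    (h₁ : HasInjectiveBranch g k₁ θ₁) (h₂ : HasInjectiveBranch g k₂ θ₂) :
    ∃ n : ℕ, ∃ G : ℂ → ℂ, DifferentiableOn ℂ G (ball (0 : ℂ) 1) ∧
      ∀ z ∈ ball (0 : ℂ) 1 \ {0}, G z = z ^ n * g z := by
  set δ := ‖Complex.exp (θ₁ * I) - Complex.exp (θ₂ * I)‖ / 2 with hδ_def
  have hδ : 0 < δ := half_pos (norm_pos_iff.2 (sub_ne_zero.2 hθ))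
  obtain ⟨n, hn⟩ := exists_nat_ge (192 * Real.pi / δ)
  have hcover : ({0}ᶜ : Set ℂ) = coneAwayFrom (Complex.exp (θ₁ * I)) δ \ {0} ∪
      coneAwayFrom (Complex.exp (θ₂ * I)) δ \ {0} := by
    rw [← union_sdiff_distrib, coneAwayFrom_union_coneAwayFrom (by linarith), compl_eq_univ_sdiff]
  have hO : g =O[𝓝[≠] 0] fun z => (z ^ n)⁻¹ := by
    rw [hcover, nhdsWithin_union]
    exact (isBigO_inv_pow_of_hasInjectiveBranch hg h₁ hδ hn).sup
      (isBigO_inv_pow_of_hasInjectiveBranch hg h₂ hδ hn)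
  obtain ⟨G, hG, hGg⟩ := exists_differentiableOn_eq_pow_smul (ball_mem_nhds 0 one_pos) hg
    (by simpa only [sub_zero] using hO)
  exact ⟨n, G, hG, by simpa only [sub_zero, smul_eq_mul] using hGg⟩

/-- Proposition on injective developing maps: if for every `θ` some
branch `φ_θ = g + (c/2πi)·log` is injective on `𝔻 ∖ l^θ`, then `g` has no essential
singularity at `0`, i.e. `z^n·g(z)` extends holomorphically across `0` for some `n`. -/
theorem no_essential_singularity_of_injective_branches
    (g : ℂ → ℂ) (c : ℂ)
    (hg : DifferentiableOn ℂ g (ball (0 : ℂ) 1 \ {0}))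
    (hyp : ∀ θ : ℝ, ∃ L : ℂ → ℂ,
      DifferentiableOn ℂ L (ball (0 : ℂ) 1 \ lray θ) ∧
      (∀ z ∈ ball (0 : ℂ) 1 \ lray θ, Complex.exp (L z) = z) ∧
      InjOn (fun z => g z + c / (2 * (Real.pi : ℂ) * Complex.I) * L z)
        (ball (0 : ℂ) 1 \ lray θ)) :
    ∃ n : ℕ, ∃ G : ℂ → ℂ, DifferentiableOn ℂ G (ball (0 : ℂ) 1) ∧
      ∀ z ∈ ball (0 : ℂ) 1 \ {0}, G z = z ^ n * g z := by
  have hdirections : Complex.exp ((0 : ℝ) * I) ≠ Complex.exp (Real.pi * I) := by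
    rw [exp_pi_mul_I]
    norm_num
  exact no_essential_singularity_of_injective_branches_general hg hdirections (hyp 0) (hyp Real.pi)
end

section
/- Let g be a holomorphic function on the punctured unit disc 𝔻* which extends meromorphically to 0, and let c ∈ ℂ. Assume that for every θ ∈ ℝ there exists a branch L_θ of the logarithm on 𝔻 ∖ l^θ such that the map z ↦ g(z) + (c/(2πi))·L_θ(z) is injective on 𝔻 ∖ l^θ. Then the pole of g at 0 has order at most 1; that is, the function z ↦ z·g(z) extends holomorphically across 0. Equivalently, if g has a pole of order at least 2 at 0 (i.e., there exist an integer k₀ ≤ −2 and a ≠ 0 with z^{−k₀}·g(z) → a as z → 0), then for some θ the map z ↦ g(z) + (c/(2πi))·L_θ(z) fails to be injective on 𝔻 ∖ l^θ. -/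
open Complex Metric Set Filter Topology

/-!
Write `F = g + κ L` and suppose that `g` has a pole of order `m ≥ 2`, say `g z = z⁻ᵐ G z` with
`G 0 ≠ 0`. Since `L (r w) = L w + log r` for `0 < r ≤ 1`, the blow-up
`rᵐ (F (r w) - κ log r) = w⁻ᵐ G (r w) + κ rᵐ L w` is analytic in `(r, w)` up to `r = 0`, where it
equals `G 0 w⁻ᵐ`, a function with non-vanishing derivative. By the implicit function theorem every
`p` in the slit disc is the limit of points `φ r` with `F (r φ r) = (r p)⁻ᵐ G 0 + κ log r`. As
`m ≥ 2`, the slit disc contains `p ≠ q` with `pᵐ = qᵐ`; for small `r` the corresponding points are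
distinct, but `F` takes the same value at them.
-/

theorem exists_tendsto_eventually_eq_of_hasDerivAt_snd {𝕜 E : Type*} [NontriviallyNormedField 𝕜]
    [CompleteSpace 𝕜] [NormedAddCommGroup E] [NormedSpace 𝕜 E] [CompleteSpace E]
    {f : E × 𝕜 → 𝕜} {f' : E × 𝕜 →L[𝕜] 𝕜} {x : E} {y d : 𝕜}
    (hf : HasStrictFDerivAt f f' (x, y)) (hd : HasDerivAt (fun w ↦ f (x, w)) d y) (hd₀ : d ≠ 0) :
    ∃ φ : E → 𝕜, Tendsto φ (𝓝 x) (𝓝 y) ∧ ∀ᶠ r in 𝓝 x, f (r, φ r) = f (x, y) := by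
  have hpartial : f' ∘L .inr 𝕜 E 𝕜 = .toSpanSingleton 𝕜 d :=
    (hf.hasFDerivAt.comp y (hasFDerivAt_prodMk_right x y)).unique hd.hasFDerivAt
  have hinv : (f' ∘L .inr 𝕜 E 𝕜).IsInvertible :=
    ⟨ContinuousLinearEquiv.unitsEquivAut 𝕜 (Units.mk0 d hd₀), by rw [hpartial]; ext; simp⟩
  exact ⟨hf.implicitFunctionOfProdDomain hinv, hf.tendsto_implicitFunctionOfProdDomain hinv,
    hf.eventually_apply_implicitFunctionOfProdDomain hinv⟩

/-- `L` is a branch of the logarithm on `Ω`, that is, a holomorphic right inverse of `exp` there;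
used for the slit discs `ball 0 R \ lray θ`. Holomorphy is encoded as differentiability within `Ω`,
which is the usual notion when `Ω` is open. -/
structure IsLogBranch (L : ℂ → ℂ) (Ω : Set ℂ) : Prop where
  differentiableOn : DifferentiableOn ℂ L Ω
  exp_eq : ∀ z ∈ Ω, exp (L z) = z

namespace IsLogBranch

variable {L : ℂ → ℂ} {Ω : Set ℂ} {z : ℂ} {r : ℝ}

theorem ne_zero (hL : IsLogBranch L Ω) (hz : z ∈ Ω) : z ≠ 0 :=
  hL.exp_eq z hz ▸ exp_ne_zero (L z)

theorem apply_ofReal_mul (hL : IsLogBranch L Ω) (hz : ∀ t ∈ Ioc (0 : ℝ) 1, t * z ∈ Ω)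
    (hr : r ∈ Ioc (0 : ℝ) 1) : L (r * z) = L z + Real.log r := by
  have hz₁ : z ∈ Ω := by simpa using hz 1 (by simp)
  have hleft : ContinuousOn (fun t : ℝ ↦ L (t * z)) (Ioc 0 1) :=
    hL.differentiableOn.continuousOn.comp (by fun_prop) hz
  have hright : ContinuousOn (fun t : ℝ ↦ L z + Real.log t) (Ioc 0 1) :=
    continuousOn_const.add (continuous_ofReal.comp_continuousOn
      (Real.continuousOn_log.mono fun t ht ↦ ht.1.ne'))
  refine isCoveringMap_exp.eqOn_of_comp_eqOn isPreconnected_Ioc hleft hright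
    (fun t ht ↦ Subtype.ext ?_) (right_mem_Ioc.2 one_pos) (by simp) hr
  change exp (L (t * z)) = exp (L z + Real.log t)
  rw [hL.exp_eq _ (hz t ht), exp_add, hL.exp_eq z hz₁, ← ofReal_exp, Real.exp_log ht.1, mul_comm]

end IsLogBranch

/-- The blow-up `(r, w) ↦ rᵐ (F (r w) - κ log r)` at `0` of `F z = z⁻ᵐ G z + κ L z`, where `L` is a
branch of the logarithm, written in the form that makes sense for complex `r`, including `r = 0`. -/
noncomputable def blowUp (m : ℕ) (G : ℂ → ℂ) (κ : ℂ) (L : ℂ → ℂ) (x : ℂ × ℂ) : ℂ :=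
  (x.2 ^ m)⁻¹ * G (x.1 * x.2) + κ * x.1 ^ m * L x.2

section BlowUp

variable {L g G : ℂ → ℂ} {Ω : Set ℂ} {κ p q w : ℂ} {m : ℕ} {r : ℝ}

theorem blowUp_zero_left (hm : m ≠ 0) : blowUp m G κ L (0, w) = (w ^ m)⁻¹ * G 0 := by
  simp [blowUp, hm]

theorem analyticAt_blowUp (hG : AnalyticAt ℂ G 0) (hL : AnalyticAt ℂ L p) (hp : p ≠ 0) :
    AnalyticAt ℂ (blowUp m G κ L) (0, p) := by
  have hG' : AnalyticAt ℂ (fun x : ℂ × ℂ ↦ G (x.1 * x.2)) (0, p) :=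
    AnalyticAt.fun_comp (by simpa using hG) (analyticAt_fst.mul analyticAt_snd)
  have hL' : AnalyticAt ℂ (fun x : ℂ × ℂ ↦ L x.2) (0, p) := hL.fun_comp analyticAt_snd
  exact (((analyticAt_snd.pow m).inv (pow_ne_zero m hp)).mul hG').add
    ((analyticAt_const.mul (analyticAt_fst.pow m)).mul hL')

theorem exists_tendsto_blowUp_eq (hG : AnalyticAt ℂ G 0) (hG₀ : G 0 ≠ 0) (hm : m ≠ 0)
    (hL : AnalyticAt ℂ L p) (hp : p ≠ 0) :
    ∃ φ : ℂ → ℂ, Tendsto φ (𝓝 0) (𝓝 p) ∧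
      ∀ᶠ r in 𝓝 0, blowUp m G κ L (r, φ r) = (p ^ m)⁻¹ * G 0 := by
  have hderiv : HasDerivAt (fun w ↦ blowUp m G κ L (0, w))
      (-(m * p ^ (m - 1)) / (p ^ m) ^ 2 * G 0) p := by
    simp only [blowUp_zero_left hm]
    exact ((hasDerivAt_pow m p).inv (pow_ne_zero m hp)).mul_const _
  simpa only [blowUp_zero_left hm] using exists_tendsto_eventually_eq_of_hasDerivAt_snd
    (analyticAt_blowUp hG hL hp).hasStrictFDerivAt hderiv (by simp [hm, hp, hG₀])

theorem IsLogBranch.add_mul_eq_blowUp (hL : IsLogBranch L Ω)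
    (hw : ∀ t ∈ Ioc (0 : ℝ) 1, t * w ∈ Ω) (hr : r ∈ Ioc (0 : ℝ) 1)
    (hg : g (r * w) = ((r * w) ^ m)⁻¹ * G (r * w)) :
    g (r * w) + κ * L (r * w) = ((r : ℂ) ^ m)⁻¹ * blowUp m G κ L (r, w) + κ * Real.log r := by
  have hr₀ : (r : ℂ) ≠ 0 := ofReal_ne_zero.2 hr.1.ne'
  rw [hg, hL.apply_ofReal_mul hw hr, blowUp, mul_pow, mul_inv]
  linear_combination -κ * L w * inv_mul_cancel₀ (pow_ne_zero m hr₀)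

theorem IsLogBranch.exists_tendsto_add_mul_eq (hL : IsLogBranch L Ω) (hΩ : IsOpen Ω)
    (hstar : ∀ z ∈ Ω, ∀ t ∈ Ioc (0 : ℝ) 1, t * z ∈ Ω)
    (hG : AnalyticAt ℂ G 0) (hG₀ : G 0 ≠ 0) (hm : m ≠ 0)
    (hg : ∀ᶠ z in 𝓝[≠] 0, g z = (z ^ m)⁻¹ * G z) (hp : p ∈ Ω) :
    ∃ φ : ℝ → ℂ, Tendsto φ (𝓝[>] 0) (𝓝 p) ∧ ∀ᶠ r : ℝ in 𝓝[>] 0, r * φ r ∈ Ω ∧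
      g (r * φ r) + κ * L (r * φ r) = ((r : ℂ) ^ m)⁻¹ * ((p ^ m)⁻¹ * G 0) + κ * Real.log r := by
  have hLp : AnalyticAt ℂ L p := hL.differentiableOn.analyticAt (hΩ.mem_nhds hp)
  obtain ⟨φ, hφ, hlevel⟩ :=
    exists_tendsto_blowUp_eq (κ := κ) hG hG₀ hm hLp (hL.ne_zero hp)
  have hreal : Tendsto ((↑) : ℝ → ℂ) (𝓝[>] 0) (𝓝 0) :=
    (continuous_ofReal.tendsto' 0 0 ofReal_zero).mono_left nhdsWithin_le_nhds
  have hφr : Tendsto (fun r : ℝ ↦ φ r) (𝓝[>] 0) (𝓝 p) := hφ.comp hreal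
  have hφΩ : ∀ᶠ r : ℝ in 𝓝[>] 0, φ r ∈ Ω := hφr.eventually (hΩ.mem_nhds hp)
  have hzero : Tendsto (fun r : ℝ ↦ r * φ r) (𝓝[>] 0) (𝓝 0) := by
    simpa only [zero_mul] using hreal.mul hφr
  refine ⟨fun r ↦ φ r, hφr, ?_⟩
  filter_upwards [hφΩ, hreal.eventually hlevel, Ioc_mem_nhdsGT one_pos,
    hzero.eventually (eventually_nhdsWithin_iff.1 hg)] with r hrΩ hr_level hr hrg
  have hmem : r * φ r ∈ Ω := hstar _ hrΩ r hr
  exact ⟨hmem, by rw [hL.add_mul_eq_blowUp (hstar _ hrΩ) hr (hrg (hL.ne_zero hmem)), hr_level]⟩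

theorem IsLogBranch.not_injOn_add_mul (hL : IsLogBranch L Ω) (hΩ : IsOpen Ω)
    (hstar : ∀ z ∈ Ω, ∀ t ∈ Ioc (0 : ℝ) 1, t * z ∈ Ω)
    (hG : AnalyticAt ℂ G 0) (hG₀ : G 0 ≠ 0) (hm : m ≠ 0)
    (hg : ∀ᶠ z in 𝓝[≠] 0, g z = (z ^ m)⁻¹ * G z)
    (hp : p ∈ Ω) (hq : q ∈ Ω) (hpq : p ≠ q) (hpow : p ^ m = q ^ m) :
    ¬ InjOn (fun z ↦ g z + κ * L z) Ω := by
  intro hinj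
  obtain ⟨φ, hφ, hφ_eq⟩ := hL.exists_tendsto_add_mul_eq (κ := κ) hΩ hstar hG hG₀ hm hg hp
  obtain ⟨ψ, hψ, hψ_eq⟩ := hL.exists_tendsto_add_mul_eq (κ := κ) hΩ hstar hG hG₀ hm hg hq
  have hφψ : φ =ᶠ[𝓝[>] 0] ψ := by
    filter_upwards [hφ_eq, hψ_eq, self_mem_nhdsWithin] with r ⟨hφΩ, hφ_val⟩ ⟨hψΩ, hψ_val⟩ hr
    have hsame : (r : ℂ) * φ r = r * ψ r := hinj hφΩ hψΩ (by simp only [hφ_val, hψ_val, hpow])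
    exact mul_left_cancel₀ (ofReal_ne_zero.2 (ne_of_gt hr)) hsame
  exact hpq (tendsto_nhds_unique (hφ.congr' hφψ) hψ)

end BlowUp

section SlitDisc

variable {R θ s : ℝ} {m : ℕ}

theorem isClosed_lray (θ : ℝ) : IsClosed (lray θ) := by
  have hray : lray θ = (fun t : ℝ ↦ t • exp (θ * I)) '' Ici 0 := by
    ext z
    simp only [lray, real_smul, mem_ofPred_eq, mem_image, mem_Ici, eq_comm]
  exact hray ▸ isClosedMap_smul_left _ _ isClosed_Ici

theorem ofReal_mul_mem_ball_diff_lray {z : ℂ} (hz : z ∈ ball (0 : ℂ) R \ lray θ) {r : ℝ}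
    (hr : r ∈ Ioc (0 : ℝ) 1) : r * z ∈ ball (0 : ℂ) R \ lray θ := by
  refine ⟨?_, fun ⟨t, ht, hrz⟩ ↦ hz.2 ⟨r⁻¹ * t, mul_nonneg (inv_nonneg.2 hr.1.le) ht, ?_⟩⟩
  · rw [mem_ball_zero_iff, norm_mul, norm_real, Real.norm_of_nonneg hr.1.le]
    exact (mul_le_of_le_one_left (norm_nonneg z) hr.2).trans_lt (mem_ball_zero_iff.1 hz.1)
  · rw [ofReal_mul, mul_assoc, ← hrz, ofReal_inv,
      inv_mul_cancel_left₀ (ofReal_ne_zero.2 hr.1.ne')]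

theorem half_mul_exp_mem_ball_diff_lray (hR : 0 < R) (hs : Real.sin s ≠ 0) :
    (R / 2 : ℝ) * exp ((θ + s : ℝ) * I) ∈ ball (0 : ℂ) R \ lray θ := by
  refine ⟨?_, fun ⟨t, _, ht⟩ ↦ ?_⟩
  · rw [mem_ball_zero_iff, norm_mul, norm_exp_ofReal_mul_I, norm_real,
      Real.norm_of_nonneg (by positivity)]
    linarith
  · have hreal : (R / 2 : ℝ) * exp (s * I) = t := by
      refine mul_right_cancel₀ (exp_ne_zero (θ * I)) ?_
      rw [← ht, mul_assoc, ← exp_add]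
      push_cast
      ring_nf
    have him := congrArg im hreal
    rw [im_ofReal_mul, exp_ofReal_mul_I_im, ofReal_im] at him
    exact hs ((mul_eq_zero.1 him).resolve_left (by positivity))

theorem exp_add_mul_I_ne_exp_sub_mul_I (hs : Real.sin s ≠ 0) :
    exp ((θ + s : ℝ) * I) ≠ exp ((θ - s : ℝ) * I) := by
  intro h
  obtain ⟨n, hn⟩ := exp_eq_exp_iff_exists_int.1 h
  have hsn : s = n * Real.pi := by
    have him : θ + s = θ - s + n * (2 * Real.pi) := by simpa using congrArg im hn
    linarith
  exact hs (hsn ▸ Real.sin_int_mul_pi n)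

theorem exp_add_pi_div_mul_I_pow (hm : m ≠ 0) :
    exp ((θ + Real.pi / m : ℝ) * I) ^ m = exp ((θ - Real.pi / m : ℝ) * I) ^ m := by
  rw [← exp_nat_mul, ← exp_nat_mul, exp_eq_exp_iff_exists_int]
  refine ⟨1, ?_⟩
  push_cast
  field_simp
  ring

theorem exists_ne_pow_eq_pow_mem_ball_diff_lray (hR : 0 < R) (θ : ℝ) (hm : 2 ≤ m) :
    ∃ p ∈ ball (0 : ℂ) R \ lray θ, ∃ q ∈ ball (0 : ℂ) R \ lray θ, p ≠ q ∧ p ^ m = q ^ m := by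
  have hm₂ : (2 : ℝ) ≤ m := by exact_mod_cast hm
  have hsin : Real.sin (Real.pi / m) ≠ 0 := ne_of_gt <|
    Real.sin_pos_of_pos_of_lt_pi (by positivity) (div_lt_self Real.pi_pos (by linarith))
  have hsin_neg : Real.sin (-(Real.pi / m)) ≠ 0 := by rwa [Real.sin_neg, neg_ne_zero]
  refine ⟨_, half_mul_exp_mem_ball_diff_lray hR hsin,
    _, half_mul_exp_mem_ball_diff_lray hR hsin_neg, ?_, ?_⟩
  · rw [← sub_eq_add_neg]
    exact fun h ↦ exp_add_mul_I_ne_exp_sub_mul_I hsin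
      (mul_left_cancel₀ (ofReal_ne_zero.2 (by positivity)) h)
  · rw [← sub_eq_add_neg, mul_pow, mul_pow, exp_add_pi_div_mul_I_pow (by lia)]

end SlitDisc

theorem IsLogBranch.neg_one_le_meromorphicOrderAt {g L : ℂ → ℂ} {κ : ℂ} {θ R : ℝ} (hR : 0 < R)
    (hg : MeromorphicAt g 0) (hL : IsLogBranch L (ball 0 R \ lray θ))
    (hinj : InjOn (fun z ↦ g z + κ * L z) (ball 0 R \ lray θ)) :
    -1 ≤ meromorphicOrderAt g 0 := by
  by_contra! hlt
  lift meromorphicOrderAt g 0 to ℤ using hlt.ne_top with n hn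
  have hn₁ : n < -1 := WithTop.coe_lt_coe.1 hlt
  obtain ⟨m, rfl⟩ : ∃ m : ℕ, n = -m := ⟨n.natAbs, by lia⟩
  obtain ⟨G, hG, hG₀, hgG⟩ := (meromorphicOrderAt_eq_int_iff hg).1 hn.symm
  simp only [sub_zero, zpow_neg, zpow_natCast, smul_eq_mul] at hgG
  obtain ⟨p, hp, q, hq, hpq, hpow⟩ :=
    exists_ne_pow_eq_pow_mem_ball_diff_lray (m := m) hR θ (by lia)
  exact hL.not_injOn_add_mul (isOpen_ball.sdiff (isClosed_lray θ))
    (fun z hz t ht ↦ ofReal_mul_mem_ball_diff_lray hz ht) hG hG₀ (by lia) hgG hp hq hpq hpow hinj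

theorem exists_differentiableOn_eqOn_of_meromorphicOrderAt_nonneg {𝕜 E : Type*}
    [NontriviallyNormedField 𝕜] [NormedAddCommGroup E] [NormedSpace 𝕜 E]
    {f : 𝕜 → E} {U : Set 𝕜} {x : 𝕜} (hf : DifferentiableOn 𝕜 f (U \ {x}))
    (hmero : MeromorphicAt f x) (hord : 0 ≤ meromorphicOrderAt f x) :
    ∃ F : 𝕜 → E, DifferentiableOn 𝕜 F U ∧ EqOn F f (U \ {x}) := by
  have heq : EqOn (toMeromorphicNFAt f x) f (U \ {x}) := fun z hz ↦
    (hmero.eqOn_compl_singleton_toMeromorphicNFAt hz.2).symm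
  refine ⟨toMeromorphicNFAt f x, fun z hz ↦ ?_, heq⟩
  obtain rfl | hzx := eq_or_ne z x
  · exact (hmero.meromorphicOrderAt_nonneg_iff_analyticAt_toMeromorphicNFAt.1
      hord).differentiableAt.differentiableWithinAt
  · exact (differentiableWithinAt_insert.2 (hf.congr heq z ⟨hz, hzx⟩)).mono
      (subset_insert_sdiff_singleton x U)

theorem meromorphicAt_of_eq_pow_mul {g G : ℂ → ℂ} {U : Set ℂ} {n : ℕ} (hU : U ∈ 𝓝 0)
    (hG : DifferentiableOn ℂ G U) (hGg : ∀ z ∈ U \ {0}, G z = z ^ n * g z) :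
    MeromorphicAt g 0 := by
  have hmero : MeromorphicAt (fun z ↦ (z ^ n)⁻¹ * G z) 0 :=
    ((MeromorphicAt.id 0).pow n).inv.mul (hG.analyticAt hU).meromorphicAt
  refine hmero.congr ?_
  filter_upwards [sdiff_mem_nhdsWithin_compl hU {0}] with z hz
  rw [hGg z hz, inv_mul_cancel_left₀ (pow_ne_zero n hz.2)]

theorem pole_order_at_most_one_of_injective_branches_general {g L : ℂ → ℂ} {κ : ℂ} {θ R : ℝ}
    {U : Set ℂ} (hR : 0 < R) (hg : DifferentiableOn ℂ g (U \ {0})) (hmero : MeromorphicAt g 0)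
    (hL : IsLogBranch L (ball 0 R \ lray θ))
    (hinj : InjOn (fun z ↦ g z + κ * L z) (ball 0 R \ lray θ)) :
    ∃ G : ℂ → ℂ, DifferentiableOn ℂ G U ∧ ∀ z ∈ U \ {0}, G z = z * g z := by
  have hord : 0 ≤ meromorphicOrderAt (id * g) 0 := by
    rw [meromorphicOrderAt_mul (MeromorphicAt.id 0) hmero, meromorphicOrderAt_id]
    simpa using add_le_add_right (hL.neg_one_le_meromorphicOrderAt hR hmero hinj) 1
  exact exists_differentiableOn_eqOn_of_meromorphicOrderAt_nonneg (differentiableOn_id.mul hg)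
    ((MeromorphicAt.id 0).mul hmero) hord

/-- Lemma `k₀ ≥ -1`: if `g` is holomorphic on `𝔻*`, extends
meromorphically to `0`, and for every `θ` some branch `g + (c/2πi)·L_θ` is injective
on `𝔻 ∖ l^θ`, then the pole of `g` at `0` has order at most `1`: `z·g(z)` extends
holomorphically across `0`. -/
theorem pole_order_at_most_one_of_injective_branches
    (g : ℂ → ℂ) (c : ℂ)
    (hg : DifferentiableOn ℂ g (ball (0 : ℂ) 1 \ {0}))
    (hmero : ∃ n : ℕ, ∃ G : ℂ → ℂ, DifferentiableOn ℂ G (ball (0 : ℂ) 1) ∧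
      ∀ z ∈ ball (0 : ℂ) 1 \ {0}, G z = z ^ n * g z)
    (hyp : ∀ θ : ℝ, ∃ L : ℂ → ℂ,
      DifferentiableOn ℂ L (ball (0 : ℂ) 1 \ lray θ) ∧
      (∀ z ∈ ball (0 : ℂ) 1 \ lray θ, Complex.exp (L z) = z) ∧
      InjOn (fun z => g z + c / (2 * (Real.pi : ℂ) * Complex.I) * L z)
        (ball (0 : ℂ) 1 \ lray θ)) :
    ∃ G : ℂ → ℂ, DifferentiableOn ℂ G (ball (0 : ℂ) 1) ∧
      ∀ z ∈ ball (0 : ℂ) 1 \ {0}, G z = z * g z := by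
  obtain ⟨n, G, hG, hGg⟩ := hmero
  obtain ⟨L, hL, hexp, hinj⟩ := hyp 0
  exact pole_order_at_most_one_of_injective_branches_general one_pos hg
    (meromorphicAt_of_eq_pow_mul (ball_mem_nhds 0 one_pos) hG hGg) ⟨hL, hexp⟩ hinj
end

section
/- Let g be a holomorphic function on the punctured unit disc 𝔻* and let c ∈ ℂ. Assume that for every θ ∈ ℝ there exists a branch L_θ of the logarithm on 𝔻 ∖ l^θ such that the map φ_θ(z) = g(z) + (c/(2πi))·L_θ(z) is injective on 𝔻 ∖ l^θ. Fix such a θ and branch L_θ. Then the set of accumulation values of φ_θ at 0, namely the set of points p in the one-point compactification ℂ ∪ {∞} for which there exists a sequence (z_n) in 𝔻 ∖ l^θ with z_n → 0 and φ_θ(z_n) → p, is countable. -/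
/-
Rotate so that the slit is the negative real axis and the branch is the principal one. Then
`φ = g + c * log` is injective off the real axis and omits on each half disc the values it takes on
the other one. A Koebe-type bound for the derivative of an injective function omitting a value,
integrated by Grönwall's inequality, shows that `φ`, and therefore `g`, grows at most like a power
of `1 / |Im z|`. As `g` is holomorphic across the real axis, the maximum principle turns this into a
bound by a power of `1 / |z|`, so `g` is meromorphic at `0`. Since `log z` tends to `∞` but is
`o(1 / z)`, it is dominated by a pole of `g` and dominates (if `c ≠ 0`) a finite value of `g`;
either way `φ` has a limit in the sphere, and this limit is the only accumulation value.
-/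

open Complex Metric Set Filter Topology

theorem differentiableAt_of_comp_left {𝕜 : Type*} [NontriviallyNormedField 𝕜]
    [CompleteSpace 𝕜] {p h : 𝕜 → 𝕜} {p' z : 𝕜} (hh : ContinuousAt h z)
    (hp : HasStrictDerivAt p p' (h z)) (hp' : p' ≠ 0) (hph : DifferentiableAt 𝕜 (p ∘ h) z) :
    DifferentiableAt 𝕜 h z := by
  have hinv : DifferentiableAt 𝕜 (hp.localInverse p p' (h z) hp') ((p ∘ h) z) :=
    (hp.to_localInverse hp').hasDerivAt.differentiableAt
  refine (hinv.comp z hph).congr_of_eventuallyEq ?_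
  filter_upwards [hh.eventually (hp.eventually_left_inverse hp')] with x hx using hx.symm

theorem exists_differentiableOn_sq_eq {q : ℂ → ℂ} {w b : ℂ} {r : ℝ} (hr : 0 < r)
    (hq : DifferentiableOn ℂ q (ball w r)) (hq0 : ∀ z ∈ ball w r, q z ≠ 0) (hb : b ^ 2 = q w) :
    ∃ h : ℂ → ℂ, DifferentiableOn ℂ h (ball w r) ∧ (∀ z, h z ^ 2 = q z) ∧ h w = b := by
  have hsc : IsSimplyConnected (ball w r) := by
    have := contractibleSpace_ball (x := w) hr
    exact SimplyConnectedSpace.ofContractible _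
  obtain ⟨h, hcont, hsq⟩ := exists_continuousOn_pow_eq hsc isOpen_ball hq.continuousOn
    (by rintro ⟨z, hz, hz0⟩; exact hq0 z hz hz0) two_ne_zero
  have hdiff : DifferentiableOn ℂ h (ball w r) := fun z hz ↦ by
    have hz0 : h z ≠ 0 := fun h0 ↦ hq0 z hz (by rw [← hsq, h0, zero_pow two_ne_zero])
    have hpow : HasStrictDerivAt (fun x : ℂ ↦ x ^ 2) (2 * h z) (h z) := by
      simpa using hasStrictDerivAt_pow 2 (h z)
    refine (differentiableAt_of_comp_left
      (hcont.continuousAt (isOpen_ball.mem_nhds hz)) hpow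
      (mul_ne_zero two_ne_zero hz0) ?_).differentiableWithinAt
    simpa only [Function.comp_def, hsq] using hq.differentiableAt (isOpen_ball.mem_nhds hz)
  rcases sq_eq_sq_iff_eq_or_eq_neg.1 ((hsq w).trans hb.symm) with hw | hw
  · exact ⟨h, hdiff, hsq, hw⟩
  · exact ⟨-h, hdiff.neg, fun z ↦ by simp [hsq], by simp [hw]⟩

theorem isOpenMap_domRestrict_of_injOn {f : ℂ → ℂ} {U : Set ℂ} (hU : IsOpen U)
    (hf : DifferentiableOn ℂ f U) (hinj : InjOn f U) : IsOpenMap (U.domRestrict f) := by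
  refine IsOpenMap.of_nhds_le fun z ↦ ?_
  have hz : U ∈ 𝓝 (z : ℂ) := hU.mem_nhds z.2
  rcases (hf.analyticAt hz).eventually_constant_or_nhds_le_map_nhds with hconst | hle
  · have hsub : ∀ᶠ x : ℂ in 𝓝 (z : ℂ), x = (z : ℂ) := by
      filter_upwards [hconst, hz] with x hx hxU using hinj hxU z.2 hx
    obtain ⟨x, hx, hxz⟩ :=
      ((hsub.filter_mono nhdsWithin_le_nhds).and (self_mem_nhdsWithin (s := {(z : ℂ)}ᶜ))).exists
    exact absurd hx hxz
  · rwa [Set.domRestrict_eq, ← Filter.map_map, map_nhds_subtype_val, hU.nhdsWithin_eq z.2]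

theorem isPreconnected_inter_preimage_of_injOn {f : ℂ → ℂ} {U V : Set ℂ} (hU : IsOpen U)
    (hf : DifferentiableOn ℂ f U) (hinj : InjOn f U) (hV : IsPreconnected V)
    (hVU : V ⊆ f '' U) : IsPreconnected (U ∩ f ⁻¹' V) := by
  have hpre : IsPreconnected (U.domRestrict f ⁻¹' V) :=
    hV.preimage_of_isOpenMap hinj.injective (isOpenMap_domRestrict_of_injOn hU hf hinj)
      (by rwa [range_domRestrict])
  simpa [Set.domRestrict_eq, preimage_comp, Subtype.image_preimage_coe] using
    hpre.image _ continuous_subtype_val.continuousOn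

theorem one_le_norm_add_one_of_sq_mem_ball {h : ℂ → ℂ} {s : Set ℂ} {w z : ℂ}
    (hs : IsPreconnected s) (hh : ContinuousOn h s) (hsq : ∀ z ∈ s, h z ^ 2 ∈ ball (1 : ℂ) 1)
    (hws : w ∈ s) (hw : h w = 1) (hz : z ∈ s) : 1 ≤ ‖h z + 1‖ := by
  have hre_ne : ∀ x ∈ s, (h x).re ≠ 0 := fun x hx h0 ↦ by
    have hlt : |(h x ^ 2 - 1).re| < 1 :=
      (abs_re_le_norm _).trans_lt (mem_ball_iff_norm.1 (hsq x hx))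
    have hre : (h x ^ 2 - 1).re = -(h x).im ^ 2 - 1 := by simp [sq, h0]
    rw [hre] at hlt
    nlinarith [abs_lt.1 hlt, sq_nonneg (h x).im]
  have hre_pos : 0 < (h z).re := by
    by_contra! hneg
    obtain ⟨x, hx, hx0⟩ := hs.intermediate_value hz hws
      (continuous_re.comp_continuousOn hh) ⟨hneg, by simp [hw]⟩
    exact hre_ne x hx hx0
  calc (1 : ℝ) ≤ (h z + 1).re := by simpa using hre_pos.le
    _ ≤ ‖h z + 1‖ := re_le_norm _

theorem two_fifths_le_norm_add_one {u : ℂ} (hu : 1 ≤ ‖u ^ 2 - 1‖) : 2 / 5 ≤ ‖u + 1‖ := by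
  have hfactor : ‖u ^ 2 - 1‖ = ‖u + 1‖ * ‖u - 1‖ := by rw [← norm_mul]; ring_nf
  have hsub : ‖u - 1‖ ≤ ‖u + 1‖ + 2 := by
    simpa [show u + 1 - 2 = u - 1 by ring] using norm_sub_le (u + 1) 2
  nlinarith [norm_nonneg (u + 1)]

theorem norm_deriv_le_of_le_norm_sub {f : ℂ → ℂ} {a w : ℂ} {r δ : ℝ} (hr : 0 < r) (hδ : 0 < δ)
    (hf : DifferentiableOn ℂ f (ball w r)) (hfar : ∀ z ∈ ball w r, δ ≤ ‖f z - a‖) :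
    ‖deriv f w‖ ≤ 2 * ‖f w - a‖ ^ 2 / (δ * r) := by
  have hne : ∀ z ∈ ball w r, f z - a ≠ 0 := fun z hz ↦ norm_pos_iff.1 (hδ.trans_le (hfar z hz))
  have hsubset : closedBall w (r / 2) ⊆ ball w r := closedBall_subset_ball (half_lt_self hr)
  have hwball : w ∈ ball w r := mem_ball_self hr
  have hcauchy : ‖deriv (fun z ↦ (f z - a)⁻¹) w‖ ≤ δ⁻¹ / (r / 2) := by
    refine norm_deriv_le_of_forall_mem_sphere_norm_le (half_pos hr)
      (((hf.sub_const a).inv hne).diffContOnCl_ball hsubset) fun z hz ↦ ?_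
    rw [norm_inv]
    exact inv_anti₀ hδ (hfar z (hsubset (sphere_subset_closedBall hz)))
  have hderiv : deriv (fun z ↦ (f z - a)⁻¹) w = -deriv f w / (f w - a) ^ 2 :=
    ((hf.differentiableAt (isOpen_ball.mem_nhds hwball)).hasDerivAt.sub_const a).inv
      (hne w hwball) |>.deriv
  rw [hderiv, norm_div, norm_neg, norm_pow,
    div_le_iff₀ (pow_pos (norm_pos_iff.2 (hne w hwball)) 2)] at hcauchy
  exact hcauchy.trans_eq (by field_simp)

/- `q` has a square root `h` with `h w = 1`. The part of the ball that `q` maps into `ball 1 1` is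
connected, so there `h` is the principal branch; hence `h` stays away from `-1`, and Cauchy's
estimate applies to the bounded function `1 / (h + 1)`. -/
theorem norm_deriv_le_of_ball_one_subset_image {q : ℂ → ℂ} {w : ℂ} {r : ℝ} (hr : 0 < r)
    (hq : DifferentiableOn ℂ q (ball w r)) (hinj : InjOn q (ball w r)) (hw : q w = 1)
    (hq0 : ∀ z ∈ ball w r, q z ≠ 0) (himage : ball 1 1 ⊆ q '' ball w r) :
    ‖deriv q w‖ ≤ 40 / r := by
  have hwball : w ∈ ball w r := mem_ball_self hr
  obtain ⟨h, hh, hsq, hhw⟩ := exists_differentiableOn_sq_eq hr hq hq0 (b := 1) (by simp [hw])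
  have hfar : ∀ z ∈ ball w r, 2 / 5 ≤ ‖h z + 1‖ := fun z hz ↦ by
    by_cases hqz : q z ∈ ball 1 1
    · refine le_trans (by norm_num) (one_le_norm_add_one_of_sq_mem_ball
        (isPreconnected_inter_preimage_of_injOn isOpen_ball hq hinj
          (convex_ball (1 : ℂ) 1).isPreconnected himage)
        (hh.continuousOn.mono inter_subset_left) (fun x hx ↦ ?_)
        ⟨hwball, by simp [hw]⟩ hhw ⟨hz, hqz⟩)
      rw [hsq]
      exact hx.2
    · refine two_fifths_le_norm_add_one ?_
      rwa [hsq, ← not_lt, ← mem_ball_iff_norm]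
  have hderiv_h : ‖deriv h w‖ ≤ 2 * 2 ^ 2 / (2 / 5 * r) := by
    have := norm_deriv_le_of_le_norm_sub (a := -1) (δ := 2 / 5) hr (by norm_num) hh
      fun z hz ↦ by simpa using hfar z hz
    simpa [hhw, one_add_one_eq_two] using this
  have hderiv_q : deriv q w = 2 * deriv h w := by
    have := ((hh.differentiableAt (isOpen_ball.mem_nhds hwball)).hasDerivAt.pow 2).deriv
    rw [show h ^ 2 = q from funext hsq] at this
    simpa [hhw] using this
  calc ‖deriv q w‖ = 2 * ‖deriv h w‖ := by simp [hderiv_q]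
    _ ≤ 2 * (2 * 2 ^ 2 / (2 / 5 * r)) := by gcongr
    _ = 40 / r := by field_simp; norm_num

/- A weak form of the Koebe one-quarter theorem. Replacing `a` by the omitted value `a'` nearest to
`f w`, the function `(f - a') / (f w - a')` takes the value `1` at `w`, omits `0` and covers
`ball 1 1`. -/
theorem norm_deriv_le_of_notMem_image {f : ℂ → ℂ} {a w : ℂ} {r : ℝ} (hr : 0 < r)
    (hf : DifferentiableOn ℂ f (ball w r)) (hinj : InjOn f (ball w r))
    (ha : a ∉ f '' ball w r) : ‖deriv f w‖ ≤ 40 / r * ‖f w - a‖ := by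
  have hwball : w ∈ ball w r := mem_ball_self hr
  have hopen : IsOpen (f '' ball w r) := by
    simpa using (isOpenMap_domRestrict_of_injOn isOpen_ball hf hinj).isOpen_range
  obtain ⟨a', ha', hdist⟩ := hopen.isClosed_compl.exists_infDist_eq_dist ⟨a, ha⟩ (f w)
  have hnear : ‖f w - a'‖ ≤ ‖f w - a‖ := by
    rw [← dist_eq_norm, ← dist_eq_norm, ← hdist]
    exact infDist_le_dist_of_mem ha
  have hd : f w - a' ≠ 0 := sub_ne_zero.2 fun h ↦ ha' (h ▸ mem_image_of_mem f hwball)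
  have hkoebe : ‖deriv (fun z ↦ (f z - a') / (f w - a')) w‖ ≤ 40 / r := by
    refine norm_deriv_le_of_ball_one_subset_image hr ((hf.sub_const a').div_const _)
      (fun z hz z' hz' h ↦ hinj hz hz' (by simpa [div_left_inj' hd] using h))
      (div_self hd) (fun z hz ↦ div_ne_zero (sub_ne_zero.2 fun h ↦ ha' ⟨z, hz, h⟩) hd)
      fun u hu ↦ ?_
    have hmem : a' + u * (f w - a') ∈ f '' ball w r := by
      by_contra hout
      have hle := hdist ▸ infDist_le_dist_of_mem (x := f w) hout
      rw [dist_eq_norm, dist_eq_norm,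
        show f w - (a' + u * (f w - a')) = (1 - u) * (f w - a') by ring, norm_mul] at hle
      have hu1 : ‖1 - u‖ < 1 := by rwa [← dist_eq_norm, dist_comm]
      exact hle.not_gt (mul_lt_of_lt_one_left (norm_pos_iff.2 hd) hu1)
    obtain ⟨z, hz, hzu⟩ := hmem
    exact ⟨z, hz, by simp [hzu, hd]⟩
  rw [deriv_div_const, deriv_sub_const, norm_div, div_le_iff₀ (norm_pos_iff.2 hd)] at hkoebe
  exact hkoebe.trans (by gcongr)

theorem ball_subset_of_convex {E : Type*} [NormedAddCommGroup E] [NormedSpace ℝ E] {Ω : Set E}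
    {b z₀ : E} {ρ t : ℝ} (hΩ : Convex ℝ Ω) (hb : ball b ρ ⊆ Ω) (hz₀ : z₀ ∈ Ω) (ht : 0 < t)
    (ht1 : t ≤ 1) : ball (z₀ + t • (b - z₀)) (t * ρ) ⊆ Ω := by
  intro u hu
  have hv : z₀ + t⁻¹ • (u - z₀) ∈ ball b ρ := by
    rw [mem_ball_iff_norm] at hu ⊢
    rw [show z₀ + t⁻¹ • (u - z₀) - b = t⁻¹ • (u - (z₀ + t • (b - z₀))) by
        match_scalars <;> field_simp; ring,
      norm_smul, norm_inv, Real.norm_of_nonneg ht.le]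
    rwa [inv_mul_lt_iff₀ ht]
  have := hΩ.add_smul_sub_mem hz₀ (hb hv) ⟨ht.le, ht1⟩
  rwa [add_sub_cancel_left, smul_inv_smul₀ ht.ne', add_sub_cancel] at this

/- Grönwall's inequality along `τ ↦ z₀ + exp (-τ) • (b - z₀)`: by convexity the point at time `τ` is
the centre of a ball of radius `exp (-τ) * ρ` in `Ω`, so the factor `exp (-τ)` cancels in the
logarithmic derivative. -/
theorem norm_sub_le_mul_rpow_of_convex {f : ℂ → ℂ} {Ω : Set ℂ} {a b z₀ : ℂ} {ρ ε : ℝ}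
    (hΩ : Convex ℝ Ω) (hf : DifferentiableOn ℂ f Ω) (hinj : InjOn f Ω) (ha : a ∉ f '' Ω)
    (hρ : 0 < ρ) (hb : ball b ρ ⊆ Ω) (hz₀ : z₀ ∈ Ω) (hε : 0 < ε) (hε1 : ε ≤ 1) :
    ‖f (z₀ + ε • (b - z₀)) - a‖ ≤ ‖f b - a‖ * ε ^ (-(40 * ‖b - z₀‖ / ρ)) := by
  set γ : ℝ → ℂ := fun τ ↦ z₀ + Real.exp (-τ) • (b - z₀) with hγ
  set γ' : ℝ → ℂ := fun τ ↦ -Real.exp (-τ) • (b - z₀) with hγ'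
  have hballs (τ : ℝ) (hτ : 0 ≤ τ) : ball (γ τ) (Real.exp (-τ) * ρ) ⊆ Ω :=
    ball_subset_of_convex hΩ hb hz₀ (Real.exp_pos _) (Real.exp_le_one_iff.2 (neg_nonpos.2 hτ))
  have hderiv (τ : ℝ) (hτ : 0 ≤ τ) :
      HasDerivAt (fun τ ↦ f (γ τ) - a) (γ' τ • deriv f (γ τ)) τ := by
    have hγd : HasDerivAt γ (γ' τ) τ := by
      simpa only [hγ, hγ', mul_neg_one] using
        ((hasDerivAt_neg τ).exp.smul_const (b - z₀)).const_add z₀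
    have hnhds : Ω ∈ 𝓝 (γ τ) :=
      mem_of_superset (ball_mem_nhds _ (mul_pos (Real.exp_pos _) hρ)) (hballs τ hτ)
    exact ((hf.differentiableAt hnhds).hasDerivAt.scomp τ hγd).sub_const a
  have hbound (τ : ℝ) (hτ : 0 ≤ τ) :
      ‖γ' τ • deriv f (γ τ)‖ ≤ 40 * ‖b - z₀‖ / ρ * ‖f (γ τ) - a‖ + 0 := by
    have hkoebe := norm_deriv_le_of_notMem_image (mul_pos (Real.exp_pos (-τ)) hρ)
      (hf.mono (hballs τ hτ)) (hinj.mono (hballs τ hτ)) fun h ↦ ha (image_mono (hballs τ hτ) h)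
    calc ‖γ' τ • deriv f (γ τ)‖
        = Real.exp (-τ) * ‖b - z₀‖ * ‖deriv f (γ τ)‖ := by
          rw [hγ', norm_smul, norm_smul, norm_neg, Real.norm_of_nonneg (Real.exp_pos _).le]
      _ ≤ Real.exp (-τ) * ‖b - z₀‖ * (40 / (Real.exp (-τ) * ρ) * ‖f (γ τ) - a‖) := by gcongr
      _ = 40 * ‖b - z₀‖ / ρ * ‖f (γ τ) - a‖ + 0 := by field_simp; ring
  have hT : 0 ≤ -Real.log ε := neg_nonneg.2 (Real.log_nonpos hε.le hε1)
  have hgronwall := norm_le_gronwallBound_of_norm_deriv_right_le (a := 0) (b := -Real.log ε)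
    (fun τ hτ ↦ (hderiv τ hτ.1).continuousAt.continuousWithinAt)
    (fun τ hτ ↦ (hderiv τ hτ.1).hasDerivWithinAt) le_rfl (fun τ hτ ↦ hbound τ hτ.1)
    (-Real.log ε) (right_mem_Icc.2 hT)
  have hγ0 : γ 0 = b := by simp [hγ]
  have hγT : γ (-Real.log ε) = z₀ + ε • (b - z₀) := by simp only [hγ, neg_neg, Real.exp_log hε]
  rw [gronwallBound_ε0, hγ0, hγT] at hgronwall
  rw [Real.rpow_def_of_pos hε]
  exact hgronwall.trans_eq (by ring_nf)

/-- The part of the open unit disc strictly above the real axis, the convex domain on which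
injective functions are estimated in terms of the distance to the real axis. -/
def upperHalfDisc : Set ℂ := ball 0 1 ∩ {z | 0 < z.im}

theorem convex_upperHalfDisc : Convex ℝ upperHalfDisc :=
  (convex_ball 0 1).inter (convex_halfSpace_im_gt 0)

theorem ball_subset_upperHalfDisc : ball (I / 2) (1 / 2) ⊆ upperHalfDisc := fun u hu ↦ by
  rw [mem_ball_iff_norm] at hu
  refine ⟨?_, ?_⟩
  · have hnI : ‖I / 2‖ = 1 / 2 := by simp
    rw [mem_ball_zero_iff]
    linarith [norm_le_norm_sub_add u (I / 2)]
  · have him_gt := (abs_lt.1 ((abs_im_le_norm (u - I / 2)).trans_lt hu)).1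
    change 0 < u.im
    norm_num at him_gt
    linarith

theorem exists_mem_upperHalfDisc_add_smul_eq {z : ℂ} (hz : ‖z‖ ≤ 1 / 4) (him : 0 < z.im) :
    ∃ z₀ ∈ upperHalfDisc, ‖I / 2 - z₀‖ ≤ 1 ∧ z₀ + z.im • (I / 2 - z₀) = z := by
  have hy1 : 0 < 1 - z.im := by linarith [im_le_norm z]
  have hnI : ‖I / 2‖ = 1 / 2 := by simp
  set z₀ : ℂ := (1 - z.im)⁻¹ • (z - z.im • (I / 2)) with hz₀
  have hnorm : ‖z₀‖ ≤ 1 / 2 := by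
    have hle : ‖z - z.im • (I / 2)‖ ≤ 1 / 4 + z.im * (1 / 2) :=
      (norm_sub_le _ _).trans (by rw [norm_smul, hnI, Real.norm_of_nonneg him.le]; gcongr)
    rw [hz₀, norm_smul, norm_inv, Real.norm_of_nonneg hy1.le, inv_mul_le_iff₀ hy1]
    linarith [im_le_norm z]
  have him₀ : z₀.im = (1 - z.im)⁻¹ * (z.im / 2) := by
    rw [hz₀, smul_im, sub_im, smul_im]
    norm_num
    exact .inl (by ring)
  refine ⟨z₀, ⟨?_, ?_⟩, ?_, ?_⟩
  · rw [mem_ball_zero_iff]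
    linarith
  · change 0 < z₀.im
    rw [him₀]
    positivity
  · linarith [norm_sub_le (I / 2) z₀]
  · rw [hz₀]
    match_scalars <;> field_simp <;> ring

theorem norm_sub_mul_im_pow_le {f : ℂ → ℂ} {a z : ℂ} (hf : DifferentiableOn ℂ f upperHalfDisc)
    (hinj : InjOn f upperHalfDisc) (ha : a ∉ f '' upperHalfDisc) (hz : ‖z‖ ≤ 1 / 4)
    (him : 0 < z.im) : ‖f z - a‖ * z.im ^ 80 ≤ ‖f (I / 2) - a‖ := by
  have him1 : z.im ≤ 1 := ((im_le_norm z).trans hz).trans (by norm_num)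
  obtain ⟨z₀, hz₀, hdist, hz_eq⟩ := exists_mem_upperHalfDisc_add_smul_eq hz him
  have hgrowth := norm_sub_le_mul_rpow_of_convex convex_upperHalfDisc hf hinj ha one_half_pos
    ball_subset_upperHalfDisc hz₀ him him1
  have hexp : 40 * ‖I / 2 - z₀‖ / (1 / 2) ≤ 80 := by linarith
  rw [hz_eq] at hgrowth
  calc ‖f z - a‖ * z.im ^ 80
      ≤ ‖f (I / 2) - a‖ * z.im ^ (-(40 * ‖I / 2 - z₀‖ / (1 / 2))) * z.im ^ 80 := by gcongr
    _ = ‖f (I / 2) - a‖ * z.im ^ (80 - 40 * ‖I / 2 - z₀‖ / (1 / 2)) := by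
        rw [mul_assoc, ← Real.rpow_natCast, ← Real.rpow_add him]
        norm_num [sub_eq_neg_add]
    _ ≤ ‖f (I / 2) - a‖ :=
        mul_le_of_le_one_right (norm_nonneg _) (Real.rpow_le_one him.le him1 (sub_nonneg.2 hexp))

theorem norm_mul_im_pow_le_of_injOn_of_im_pos {f : ℂ → ℂ} {z : ℂ}
    (hf : DifferentiableOn ℂ f (ball 0 1 ∩ {z | z.im ≠ 0}))
    (hinj : InjOn f (ball 0 1 ∩ {z | z.im ≠ 0})) (hz : ‖z‖ ≤ 1 / 4) (him : 0 < z.im) :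
    ‖f z‖ * |z.im| ^ 80 ≤ ‖f (I / 2)‖ + 2 * ‖f (-(I / 2))‖ := by
  have hsub : upperHalfDisc ⊆ ball 0 1 ∩ {z | z.im ≠ 0} :=
    inter_subset_inter_right _ fun _ hx ↦ ne_of_gt hx
  have homit : f (-(I / 2)) ∉ f '' upperHalfDisc := by
    rintro ⟨x, hx, hfx⟩
    have hmem : -(I / 2) ∈ ball (0 : ℂ) 1 ∩ {z | z.im ≠ 0} :=
      ⟨by rw [mem_ball_zero_iff]; norm_num, by norm_num⟩
    have hxim : 0 < x.im := hx.2
    rw [hinj (hsub hx) hmem hfx] at hxim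
    norm_num at hxim
  have him1 : z.im ^ 80 ≤ 1 :=
    pow_le_one₀ him.le (((im_le_norm z).trans hz).trans (by norm_num))
  have hdiff := norm_sub_mul_im_pow_le (hf.mono hsub) (hinj.mono hsub) homit hz him
  calc ‖f z‖ * |z.im| ^ 80
      ≤ (‖f z - f (-(I / 2))‖ + ‖f (-(I / 2))‖) * z.im ^ 80 := by
        rw [abs_of_pos him]
        gcongr
        exact norm_le_norm_sub_add _ _
    _ ≤ ‖f (I / 2) - f (-(I / 2))‖ + ‖f (-(I / 2))‖ := by
        rw [add_mul]
        exact add_le_add hdiff (mul_le_of_le_one_right (norm_nonneg _) him1)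
    _ ≤ ‖f (I / 2)‖ + 2 * ‖f (-(I / 2))‖ := by
        linarith [norm_sub_le (f (I / 2)) (f (-(I / 2)))]

theorem exists_norm_mul_im_pow_le_of_injOn {f : ℂ → ℂ}
    (hf : DifferentiableOn ℂ f (ball 0 1 ∩ {z | z.im ≠ 0}))
    (hinj : InjOn f (ball 0 1 ∩ {z | z.im ≠ 0})) :
    ∃ C : ℝ, ∀ z : ℂ, ‖z‖ ≤ 1 / 4 → ‖f z‖ * |z.im| ^ 80 ≤ C := by
  refine ⟨2 * (‖f (I / 2)‖ + ‖f (-(I / 2))‖), fun z hz ↦ ?_⟩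
  rcases lt_trichotomy z.im 0 with him | him | him
  · have hneg : MapsTo (fun x : ℂ ↦ -x) (ball 0 1 ∩ {z | z.im ≠ 0})
        (ball 0 1 ∩ {z | z.im ≠ 0}) := fun x hx ↦ by
      simpa [mem_ball_zero_iff] using hx
    have := norm_mul_im_pow_le_of_injOn_of_im_pos (f := fun x ↦ f (-x)) (z := -z)
      (hf.comp differentiable_neg.differentiableOn hneg)
      (hinj.comp neg_injective.injOn hneg) (by rwa [norm_neg]) (by simpa using him)
    rw [neg_neg, neg_neg, neg_im, abs_neg] at this
    linarith [norm_nonneg (f (-(I / 2)))]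
  · rw [him, abs_zero, zero_pow (by norm_num), mul_zero]
    positivity
  · linarith [norm_mul_im_pow_le_of_injOn_of_im_pos hf hinj hz him, norm_nonneg (f (I / 2))]

/- On the sphere `r ^ 2 = (z - p) * conj (z - p)`, so that the polynomial
`Q z = (z - p) * (z - conj p) - r ^ 2` has modulus `2 * r * |z.im|` there, while `Q p = -r ^ 2`.
Hence the maximum principle for `g * Q ^ N` bounds `g p` even if the ball meets the real axis. -/
open scoped ComplexConjugate in
theorem norm_le_of_norm_mul_im_pow_le {E : Type*} [NormedAddCommGroup E] [NormedSpace ℂ E]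
    {g : ℂ → E} {p : ℂ} {r C : ℝ} {N : ℕ} (hr : 0 < r) (hg : DiffContOnCl ℂ g (ball p r))
    (hC : ∀ z ∈ sphere p r, ‖g z‖ * |z.im| ^ N ≤ C) :
    ‖g p‖ ≤ C * (2 / r) ^ N := by
  set Q : ℂ → ℂ := fun z ↦ (z - p) * (z - conj p) - r ^ 2 with hQ
  have hQ_sphere (z : ℂ) (hz : z ∈ sphere p r) : ‖Q z‖ = 2 * r * |z.im| := by
    have hzp : ‖z - p‖ = r := mem_sphere_iff_norm.1 hz
    have hrsq : (r : ℂ) ^ 2 = (z - p) * conj (z - p) := by rw [mul_conj', hzp]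
    have hfactor : Q z = (z - p) * ((2 * z.im : ℝ) * I) := by
      simp only [hQ]
      rw [hrsq, map_sub, ← sub_conj]
      ring
    rw [hfactor, norm_mul, hzp, norm_mul, norm_I, norm_real, norm_mul, Real.norm_two,
      Real.norm_eq_abs]
    ring
  have hQg : DiffContOnCl ℂ (fun z ↦ Q z ^ N • g z) (ball p r) :=
    Differentiable.diffContOnCl (by fun_prop) |>.smul hg
  have hmax : ‖Q p ^ N • g p‖ ≤ C * (2 * r) ^ N := by
    refine norm_le_of_forall_mem_frontier_norm_le isBounded_ball hQg (fun z hz ↦ ?_)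
      (subset_closure (mem_ball_self hr))
    rw [frontier_ball p hr.ne'] at hz
    calc ‖Q z ^ N • g z‖ = ‖g z‖ * |z.im| ^ N * (2 * r) ^ N := by
          rw [norm_smul, norm_pow, hQ_sphere z hz]; ring
      _ ≤ C * (2 * r) ^ N := by gcongr; exact hC z hz
  have hQp : ‖Q p‖ = r ^ 2 := by simp [hQ]
  rw [norm_smul, norm_pow, hQp, ← le_div_iff₀' (by positivity)] at hmax
  calc ‖g p‖ ≤ C * (2 * r) ^ N / (r ^ 2) ^ N := hmax
    _ = C * (2 / r) ^ N := by rw [mul_div_assoc, ← div_pow]; field_simp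

theorem meromorphicAt_of_pow_smul_isBigO_one {E : Type*} [NormedAddCommGroup E] [NormedSpace ℂ E]
    [CompleteSpace E] {f : ℂ → E} {x : ℂ} {n : ℕ}
    (hf : ∀ᶠ z in 𝓝[≠] x, DifferentiableAt ℂ f z)
    (hO : (fun z ↦ (z - x) ^ n • f z) =O[𝓝[≠] x] fun _ ↦ (1 : ℝ)) : MeromorphicAt f x := by
  refine ⟨n + 1, analyticAt_of_differentiable_on_punctured_nhds_of_continuousAt ?_ ?_⟩
  · filter_upwards [hf] with z hz
    exact ((differentiableAt_id.sub_const x).pow _).smul hz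
  · have hzero : Tendsto (fun z : ℂ ↦ z - x) (𝓝[≠] x) (𝓝 0) := by
      simpa using (tendsto_id.sub_const x).mono_left (nhdsWithin_le_nhds (a := x) (s := {x}ᶜ))
    rw [continuousAt_iff_punctured_nhds, sub_self, zero_pow n.succ_ne_zero, zero_smul]
    simpa only [pow_succ', mul_smul] using
      hzero.zero_smul_isBoundedUnder_le (Asymptotics.isBigO_one_iff ℝ |>.1 hO)

theorem meromorphicAt_zero_of_norm_mul_im_pow_le {E : Type*} [NormedAddCommGroup E]
    [NormedSpace ℂ E] [CompleteSpace E] {g : ℂ → E} {N : ℕ} {C : ℝ}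
    (hg : ∀ᶠ z in 𝓝[≠] 0, DifferentiableAt ℂ g z)
    (hC : ∀ᶠ z in 𝓝[≠] 0, ‖g z‖ * |z.im| ^ N ≤ C) : MeromorphicAt g 0 := by
  obtain ⟨δ, hδ, hsub⟩ := Metric.mem_nhdsWithin_iff.1 (hg.and hC)
  refine meromorphicAt_of_pow_smul_isBigO_one (n := N) hg (.of_bound (C * 4 ^ N) ?_)
  filter_upwards [self_mem_nhdsWithin, nhdsWithin_le_nhds (ball_mem_nhds 0 (half_pos hδ))]
    with p hp0 hpδ
  have hp : 0 < ‖p‖ := norm_pos_iff.2 hp0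
  have hgood (z : ℂ) (hz : z ∈ closedBall p (‖p‖ / 2)) :
      DifferentiableAt ℂ g z ∧ ‖g z‖ * |z.im| ^ N ≤ C := by
    rw [mem_closedBall_iff_norm] at hz
    rw [mem_ball_zero_iff] at hpδ
    refine hsub ⟨?_, ?_⟩
    · rw [mem_ball_zero_iff]
      linarith [norm_le_norm_sub_add z p]
    · rintro rfl
      rw [zero_sub, norm_neg] at hz
      linarith
  have hle := norm_le_of_norm_mul_im_pow_le (half_pos hp)
    (DifferentiableOn.diffContOnCl fun z hz ↦
      (hgood z (closure_ball_subset_closedBall hz)).1.differentiableWithinAt)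
    fun z hz ↦ (hgood z (sphere_subset_closedBall hz)).2
  calc ‖(p - 0) ^ N • g p‖ = ‖p‖ ^ N * ‖g p‖ := by simp [norm_smul]
    _ ≤ ‖p‖ ^ N * (C * (2 / (‖p‖ / 2)) ^ N) := by gcongr
    _ = C * 4 ^ N * ‖(1 : ℝ)‖ := by
      rw [norm_one, mul_one, mul_left_comm, ← mul_pow]
      congr 2
      field_simp
      norm_num

theorem tendsto_add_cobounded_of_isLittleO {α 𝕜 : Type*} [NormedField 𝕜] {u v : α → 𝕜}
    {l : Filter α} (huv : u =o[l] v) (hv : Tendsto v l (Bornology.cobounded 𝕜)) :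
    Tendsto (fun z ↦ u z + v z) l (Bornology.cobounded 𝕜) := by
  rw [← tendsto_norm_atTop_iff_cobounded] at hv ⊢
  exact huv.right_isBigO_add.trans_tendsto_norm_atTop hv

theorem inv_sub_isBigO_of_meromorphicOrderAt_neg {𝕜 : Type*} [NontriviallyNormedField 𝕜]
    {g : 𝕜 → 𝕜} {x : 𝕜} (hg : meromorphicOrderAt g x < 0) :
    (fun z ↦ (z - x)⁻¹) =O[𝓝[≠] x] g := by
  have hmero : MeromorphicAt g x := meromorphicAt_of_meromorphicOrderAt_ne_zero hg.ne
  have hinv : MeromorphicAt (fun z ↦ (z - x)⁻¹) x := by fun_prop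
  have horder : 0 ≤ meromorphicOrderAt (fun z ↦ (z - x)⁻¹ * (g z)⁻¹) x := by
    rw [fun_meromorphicOrderAt_mul hinv hmero.fun_inv, fun_meromorphicOrderAt_inv,
      fun_meromorphicOrderAt_inv, meromorphicOrderAt_id_sub_const]
    lift meromorphicOrderAt g x to ℤ using hg.ne_top with n
    have hn : n < 0 := mod_cast hg
    exact WithTop.coe_le_coe.2 (show 0 ≤ -1 + -n by lia)
  obtain ⟨a, ha⟩ := tendsto_nhds_of_meromorphicOrderAt_nonneg (hinv.mul hmero.inv) horder
  have hne : ∀ᶠ z in 𝓝[≠] x, g z ≠ 0 :=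
    (meromorphicOrderAt_ne_top_iff_eventually_ne_zero hmero).1 hg.ne_top
  exact Asymptotics.isBigO_of_div_tendsto_nhds (hne.mono fun z hz h ↦ absurd h hz) a
    (by simpa only [div_eq_mul_inv] using! ha)

theorem exists_tendsto_add_mul_of_isLittleO {g f : ℂ → ℂ} {x : ℂ} {l : Filter ℂ}
    (hg : MeromorphicAt g x) (hl : l ≤ 𝓝[≠] x) (hf : Tendsto f l (Bornology.cobounded ℂ))
    (hfo : f =o[l] fun z ↦ (z - x)⁻¹) (c : ℂ) :
    ∃ q : OnePoint ℂ, Tendsto (fun z ↦ ((g z + c * f z : ℂ) : OnePoint ℂ)) l (𝓝 q) := by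
  have hinfty {u : ℂ → ℂ} (hu : Tendsto u l (Bornology.cobounded ℂ)) :
      ∃ q : OnePoint ℂ, Tendsto (fun z ↦ (u z : OnePoint ℂ)) l (𝓝 q) := by
    refine ⟨OnePoint.infty, OnePoint.tendsto_coe_infty.comp ?_⟩
    rwa [coclosedCompact_eq_cocompact, ← Metric.cobounded_eq_cocompact]
  rcases lt_or_ge (meromorphicOrderAt g x) 0 with hpole | hreg
  · have hfg : (fun z ↦ c * f z) =o[l] g :=
      (hfo.trans_isBigO ((inv_sub_isBigO_of_meromorphicOrderAt_neg hpole).mono hl)).const_mul_left c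
    apply hinfty
    simpa only [add_comm] using tendsto_add_cobounded_of_isLittleO hfg
      ((tendsto_cobounded_of_meromorphicOrderAt_neg hpole).mono_left hl)
  obtain ⟨a, ha⟩ := tendsto_nhds_of_meromorphicOrderAt_nonneg hg hreg
  rcases eq_or_ne c 0 with rfl | hc
  · exact ⟨a, (OnePoint.continuous_coe.tendsto a).comp (by simpa using ha.mono_left hl)⟩
  · have hcf : Tendsto (fun z ↦ c * f z) l (Bornology.cobounded ℂ) :=
      (tendsto_mul_left_cobounded hc).comp hf
    have hone : (fun _ ↦ (1 : ℂ)) =o[l] fun z ↦ c * f z :=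
      (Asymptotics.isLittleO_one_left_iff ℂ).2 (tendsto_norm_atTop_iff_cobounded.2 hcf)
    exact hinfty (tendsto_add_cobounded_of_isLittleO
      (((ha.mono_left hl).isBigO_one ℂ).trans_isLittleO hone) hcf)

theorem tendsto_log_nhdsNE_zero_cobounded : Tendsto log (𝓝[≠] 0) (Bornology.cobounded ℂ) := by
  rw [← tendsto_norm_atTop_iff_cobounded]
  refine tendsto_atTop_mono (fun z ↦ abs_re_le_norm (log z)) ?_
  simp only [log_re]
  exact tendsto_abs_atBot_atTop.comp (Real.tendsto_log_nhdsGT_zero.comp tendsto_norm_nhdsNE_zero)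

theorem log_isLittleO_inv_nhdsNE_zero : log =o[𝓝[≠] 0] fun z : ℂ ↦ z⁻¹ := by
  have hre : (fun z : ℂ ↦ ((log z).re : ℂ)) =o[𝓝[≠] 0] fun z : ℂ ↦ z⁻¹ := by
    have := (isLittleO_log_rpow_nhdsGT_zero (neg_one_lt_zero)).comp_tendsto
      (tendsto_norm_nhdsNE_zero (E := ℂ))
    rw [← Asymptotics.isLittleO_norm_norm]
    simpa [Function.comp_def, Real.rpow_neg_one, log_re] using this.norm_left
  have him : (fun z : ℂ ↦ ((log z).im : ℂ) * I) =o[𝓝[≠] 0] fun z : ℂ ↦ z⁻¹ := by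
    have hbdd : (fun z : ℂ ↦ ((log z).im : ℂ) * I) =O[𝓝[≠] 0] fun _ ↦ (1 : ℂ) :=
      .of_bound Real.pi (.of_forall fun z ↦ by simpa [log_im] using abs_arg_le_pi z)
    exact hbdd.trans_isLittleO
      ((Asymptotics.isLittleO_one_left_iff ℂ).2 (by simpa using tendsto_norm_inv_nhdsNE_zero_atTop))
  simpa only [re_add_im] using! hre.add him

theorem isPreconnected_ball_inter_slitPlane : IsPreconnected (ball 0 1 ∩ slitPlane) := by
  have hstar : StarConvex ℝ ((1 / 2 : ℝ) : ℂ) (ball 0 1 ∩ slitPlane) :=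
    ((convex_ball 0 1).starConvex (by norm_num)).inter
      (starConvex_ofReal_slitPlane (by norm_num))
  have hmem : ((1 / 2 : ℝ) : ℂ) ∈ ball 0 1 ∩ slitPlane :=
    ⟨by norm_num, ofReal_mem_slitPlane.2 (by norm_num)⟩
  exact (hstar.isPathConnected hmem).isConnected.isPreconnected

theorem exists_eqOn_log_add_const {L : ℂ → ℂ} {S : Set ℂ} {v : ℂ} (hS : IsPreconnected S)
    (hslit : S ⊆ slitPlane) (hL : ContinuousOn L S) (hexp : ∀ w ∈ S, exp (L w) = v * w) :
    ∃ k, EqOn L (fun w ↦ log w + k) S := by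
  rcases S.eq_empty_or_nonempty with rfl | ⟨w₀, hw₀⟩
  · exact ⟨0, eqOn_empty _ _⟩
  have hexp_sub (w : ℂ) (hw : w ∈ S) : exp (L w - log w) = v := by
    have hw0 : w ≠ 0 := slitPlane_ne_zero (hslit hw)
    rw [exp_sub, exp_log hw0, hexp w hw, mul_div_cancel_right₀ _ hw0]
  refine ⟨L w₀ - log w₀, fun w hw ↦ sub_eq_iff_eq_add'.1 ?_⟩
  refine isCoveringMap_exp.constOn_of_comp hS
    (hL.sub fun w hw ↦ (continuousAt_clog (hslit hw)).continuousWithinAt)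
    (fun a ha b hb ↦ Subtype.ext ?_) hw hw₀
  exact (hexp_sub a ha).trans (hexp_sub b hb).symm

theorem neg_exp_mul_mem_lray_iff {θ : ℝ} {w : ℂ} : -exp (θ * I) * w ∈ lray θ ↔ w ∉ slitPlane := by
  have hmem (t : ℝ) : -exp (θ * I) * w = t * exp (θ * I) ↔ w = -t := by
    rw [neg_mul_comm, mul_comm, mul_left_inj' (exp_ne_zero _), neg_eq_iff_eq_neg]
  simp only [lray, mem_ofPred_eq, hmem, mem_slitPlane_iff, not_or, not_lt, not_not]
  constructor
  · rintro ⟨t, ht, rfl⟩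
    simpa using ht
  · rintro ⟨hre, him⟩
    exact ⟨-w.re, neg_nonneg.2 hre, Complex.ext (by simp) (by simpa using him)⟩

theorem neg_exp_mul_mem_ball_diff_lray_iff {θ : ℝ} {w : ℂ} :
    -exp (θ * I) * w ∈ ball 0 1 \ lray θ ↔ w ∈ ball 0 1 ∩ slitPlane := by
  rw [Set.mem_sdiff, mem_inter_iff, neg_exp_mul_mem_lray_iff, not_not]
  simp [norm_exp_ofReal_mul_I]

theorem meromorphicAt_zero_of_injOn_add_mul_log {g : ℂ → ℂ} {c : ℂ}
    (hg : DifferentiableOn ℂ g (ball 0 1 \ {0}))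
    (hinj : InjOn (fun z ↦ g z + c * log z) (ball 0 1 ∩ {z | z.im ≠ 0})) : MeromorphicAt g 0 := by
  have hlog : DifferentiableOn ℂ log (ball 0 1 ∩ {z | z.im ≠ 0}) := fun z hz ↦
    (differentiableAt_log (.inr hz.2)).differentiableWithinAt
  have hsub : ball (0 : ℂ) 1 ∩ {z | z.im ≠ 0} ⊆ ball 0 1 \ {0} := fun z hz ↦
    ⟨hz.1, fun h0 ↦ hz.2 (by rw [mem_singleton_iff.1 h0, zero_im])⟩
  obtain ⟨C, hC⟩ := exists_norm_mul_im_pow_le_of_injOn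
    ((hg.mono hsub).add (hlog.const_mul c)) hinj
  have hball : ∀ᶠ z : ℂ in 𝓝[≠] 0, ‖z‖ < 1 / 4 := by
    filter_upwards [nhdsWithin_le_nhds (ball_mem_nhds 0 (by norm_num : (0 : ℝ) < 1 / 4))] with z hz
    exact mem_ball_zero_iff.1 hz
  refine meromorphicAt_zero_of_norm_mul_im_pow_le (N := 80) (C := C + ‖c‖) ?_ ?_
  · filter_upwards [hball, self_mem_nhdsWithin] with z hz hz0
    refine hg.differentiableAt ((isOpen_ball.sdiff isClosed_singleton).mem_nhds ⟨?_, hz0⟩)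
    rw [mem_ball_zero_iff]
    linarith
  · filter_upwards [hball, self_mem_nhdsWithin, log_isLittleO_inv_nhdsNE_zero.bound one_pos]
      with z hz hz0 hlogz
    have hz_pos : 0 < ‖z‖ := norm_pos_iff.2 hz0
    have him : |z.im| ^ 80 ≤ ‖z‖ :=
      (pow_le_of_le_one (abs_nonneg _) (by linarith [abs_im_le_norm z]) (by norm_num)).trans
        (abs_im_le_norm z)
    have hlog_im : ‖log z‖ * |z.im| ^ 80 ≤ 1 :=
      calc ‖log z‖ * |z.im| ^ 80 ≤ 1 * ‖z⁻¹‖ * ‖z‖ := by gcongr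
        _ = 1 := by rw [one_mul, norm_inv, inv_mul_cancel₀ hz_pos.ne']
    calc ‖g z‖ * |z.im| ^ 80
        ≤ (‖g z + c * log z‖ + ‖c‖ * ‖log z‖) * |z.im| ^ 80 := by
          gcongr
          simpa using norm_sub_le (g z + c * log z) (c * log z)
      _ = ‖g z + c * log z‖ * |z.im| ^ 80 + ‖c‖ * (‖log z‖ * |z.im| ^ 80) := by ring
      _ ≤ C + ‖c‖ := add_le_add (hC z hz.le) (mul_le_of_le_one_right (norm_nonneg c) hlog_im)

theorem exists_tendsto_add_mul_log_of_injOn {g : ℂ → ℂ} {c : ℂ}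
    (hg : DifferentiableOn ℂ g (ball 0 1 \ {0}))
    (hinj : InjOn (fun z ↦ g z + c * log z) (ball 0 1 ∩ {z | z.im ≠ 0})) :
    ∃ q : OnePoint ℂ, Tendsto (fun z ↦ ((g z + c * log z : ℂ) : OnePoint ℂ)) (𝓝[≠] 0) (𝓝 q) :=
  exists_tendsto_add_mul_of_isLittleO (meromorphicAt_zero_of_injOn_add_mul_log hg hinj) le_rfl
    tendsto_log_nhdsNE_zero_cobounded (by simpa only [sub_zero] using log_isLittleO_inv_nhdsNE_zero)
    c

theorem exists_eqOn_neg_exp_mul_log_add_const {L : ℂ → ℂ} {θ : ℝ}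
    (hL : ContinuousOn L (ball 0 1 \ lray θ)) (hexp : ∀ z ∈ ball 0 1 \ lray θ, exp (L z) = z) :
    ∃ k, EqOn (fun w ↦ L (-exp (θ * I) * w)) (fun w ↦ log w + k) (ball 0 1 ∩ slitPlane) := by
  have hmaps : MapsTo (-exp (θ * I) * ·) (ball 0 1 ∩ slitPlane) (ball 0 1 \ lray θ) := fun _ ↦
    neg_exp_mul_mem_ball_diff_lray_iff.2
  exact exists_eqOn_log_add_const isPreconnected_ball_inter_slitPlane inter_subset_right
    (hL.comp (continuous_const_mul _).continuousOn hmaps) fun w hw ↦ hexp _ (hmaps hw)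

theorem exists_tendsto_add_mul_branch_of_injOn {g L : ℂ → ℂ} {c : ℂ} {θ : ℝ}
    (hg : DifferentiableOn ℂ g (ball 0 1 \ {0})) (hL : ContinuousOn L (ball 0 1 \ lray θ))
    (hexp : ∀ z ∈ ball 0 1 \ lray θ, exp (L z) = z)
    (hinj : InjOn (fun z ↦ g z + c * L z) (ball 0 1 \ lray θ)) :
    ∃ q : OnePoint ℂ, Tendsto (fun z ↦ ((g z + c * L z : ℂ) : OnePoint ℂ))
      (𝓝[ball 0 1 \ lray θ] 0) (𝓝 q) := by
  obtain ⟨k, hk⟩ := exists_eqOn_neg_exp_mul_log_add_const hL hexp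
  set v : ℂ := -exp (θ * I) with hv
  have hv0 : v ≠ 0 := neg_ne_zero.2 (exp_ne_zero _)
  have hφ : EqOn (fun w ↦ g (v * w) + c * L (v * w))
      (fun w ↦ g (v * w) + c * k + c * log w) (ball 0 1 ∩ slitPlane) := fun w hw ↦ by
    dsimp only
    rw [show L (v * w) = log w + k from hk hw]
    ring
  have hg_rot : DifferentiableOn ℂ (fun w ↦ g (v * w) + c * k) (ball 0 1 \ {0}) := by
    refine (hg.comp (differentiable_id.const_mul v).differentiableOn fun w hw ↦ ?_).add_const _
    simpa [hv, norm_exp_ofReal_mul_I] using hw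
  have hinj_rot : InjOn (fun w ↦ g (v * w) + c * k + c * log w) (ball 0 1 ∩ slitPlane) :=
    (hinj.comp (mul_right_injective₀ hv0).injOn fun _ ↦
      neg_exp_mul_mem_ball_diff_lray_iff.2).congr hφ
  obtain ⟨q, hq⟩ := exists_tendsto_add_mul_log_of_injOn hg_rot
    (hinj_rot.mono (inter_subset_inter_right _ fun _ ↦ .inr))
  have hmaps_inv : MapsTo (v⁻¹ * ·) (ball 0 1 \ lray θ) (ball 0 1 ∩ slitPlane) := fun z hz ↦
    neg_exp_mul_mem_ball_diff_lray_iff.1 (by rwa [mul_inv_cancel_left₀ hv0])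
  have hrot : Tendsto (v⁻¹ * ·) (𝓝[ball 0 1 \ lray θ] 0) (𝓝[≠] 0) := by
    refine tendsto_nhdsWithin_iff.2 ⟨?_, ?_⟩
    · exact ((continuous_const_mul v⁻¹).tendsto' 0 0 (mul_zero _)).mono_left nhdsWithin_le_nhds
    · filter_upwards [self_mem_nhdsWithin] with z hz using slitPlane_ne_zero (hmaps_inv hz).2
  refine ⟨q, (hq.comp hrot).congr' ?_⟩
  filter_upwards [self_mem_nhdsWithin] with z hz
  have hφz := hφ (hmaps_inv hz)
  simp only [mul_inv_cancel_left₀ hv0] at hφz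
  simp only [Function.comp_apply, mul_inv_cancel_left₀ hv0, hφz]

theorem accumulation_values_countable_general
    (g : ℂ → ℂ) (c : ℂ)
    (hg : DifferentiableOn ℂ g (ball (0 : ℂ) 1 \ {0}))
    (θ : ℝ) (L : ℂ → ℂ)
    (hL : ContinuousOn L (ball (0 : ℂ) 1 \ lray θ))
    (hexp : ∀ z ∈ ball (0 : ℂ) 1 \ lray θ, Complex.exp (L z) = z)
    (hinj : InjOn (fun z => g z + c * L z) (ball (0 : ℂ) 1 \ lray θ)) :
    Set.Subsingleton {p : OnePoint ℂ | ∃ u : ℕ → ℂ,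
      (∀ n, u n ∈ ball (0 : ℂ) 1 \ lray θ) ∧
      Tendsto u atTop (𝓝 0) ∧
      Tendsto (fun n => ((g (u n) + c * L (u n) : ℂ) : OnePoint ℂ)) atTop (𝓝 p)} := by
  obtain ⟨q, hq⟩ := exists_tendsto_add_mul_branch_of_injOn hg hL hexp hinj
  refine subsingleton_of_subset_singleton (a := q) fun p ⟨u, hu, hu0, hup⟩ ↦ ?_
  exact tendsto_nhds_unique hup (hq.comp (tendsto_nhdsWithin_iff.2 ⟨hu0, .of_forall hu⟩))

/-- under the injectivity hypothesis on all branches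
`φ_θ = g + (c/2πi)·L_θ`, for a fixed such `θ` and branch `L`, the set of
accumulation values of `φ_θ` at `0` in the Riemann sphere `ℂ ∪ {∞}` is countable. -/
theorem accumulation_values_countable
    (g : ℂ → ℂ) (c : ℂ)
    (hg : DifferentiableOn ℂ g (ball (0 : ℂ) 1 \ {0}))
    (hyp : ∀ θ' : ℝ, ∃ L' : ℂ → ℂ,
      DifferentiableOn ℂ L' (ball (0 : ℂ) 1 \ lray θ') ∧
      (∀ z ∈ ball (0 : ℂ) 1 \ lray θ', Complex.exp (L' z) = z) ∧
      InjOn (fun z => g z + c / (2 * (Real.pi : ℂ) * Complex.I) * L' z)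
        (ball (0 : ℂ) 1 \ lray θ'))
    (θ : ℝ) (L : ℂ → ℂ)
    (hL : DifferentiableOn ℂ L (ball (0 : ℂ) 1 \ lray θ))
    (hexp : ∀ z ∈ ball (0 : ℂ) 1 \ lray θ, Complex.exp (L z) = z)
    (hinj : InjOn (fun z => g z + c / (2 * (Real.pi : ℂ) * Complex.I) * L z)
      (ball (0 : ℂ) 1 \ lray θ)) :
    Set.Countable {p : OnePoint ℂ | ∃ u : ℕ → ℂ,
      (∀ n, u n ∈ ball (0 : ℂ) 1 \ lray θ) ∧
      Tendsto u atTop (𝓝 0) ∧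
      Tendsto (fun n =>
          ((g (u n) + c / (2 * (Real.pi : ℂ) * Complex.I) * L (u n) : ℂ) :
            OnePoint ℂ))
        atTop (𝓝 p)} := by
  exact (accumulation_values_countable_general g _ hg θ L hL.continuousOn hexp hinj).countable
end
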